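/- For every integer n ≥ 3, as an identity in the field of rational functions ℚ(z1,z2,z3), the triply-refined ASM generating function at x = y = 1 satisfies: (z1·z3−z3+1)(z2·z3−z2+1)·z3^{n−1}·Ztri_n(1,1;z1,z2,1/z3) = ( z1·z3 / ( A_{n−2}·(z1−z2)(z3−1) ) )·( (z1z3−z1+1)(z1z3−z3+1)·z2·Z_{n−1}(1,1;z1)·Zopp_{n−1}(1,1;z2,z3) − (z2z3−z2+1)(z2z3−z3+1)·z1·Z_{n−1}(1,1;z2)·Zopp_{n−1}(1,1;z1,z3) ) + (z2−1)(z3−1)(z1z3−z3+1)·z1·z2^{n−1}·Z_{n−1}(1,1;z1) + (z1−1)(z3−1)(z2z3−z2+1)·z3^{n−1}·Z_{n−1}(1,1;z2), where A_m denotes the number of ASMs of size m. -/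

import Mathlib

open Finset

/-- The `n × n` integer matrix encoded by `e`, with entries in `{-1, 0, 1}`. -/
def asmMat {n : ℕ} (e : Fin n → Fin n → Fin 3) : Fin n → Fin n → ℤ :=
  fun i j => (e i j : ℤ) - 1

/-- `A` is an alternating sign matrix: all entries lie in `{-1, 0, 1}`, every
partial row sum and every partial column sum is `0` or `1` (equivalently, the
nonzero entries of each row and of each column alternate in sign), and every
complete row sum and column sum is `1`. -/
def IsASM {n : ℕ} (A : Fin n → Fin n → ℤ) : Prop :=
  (∀ i j, A i j = -1 ∨ A i j = 0 ∨ A i j = 1) ∧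
  (∀ (i j : Fin n), (∑ j' ∈ univ.filter (fun j' : Fin n => j' ≤ j), A i j') = 0 ∨
    (∑ j' ∈ univ.filter (fun j' : Fin n => j' ≤ j), A i j') = 1) ∧
  (∀ (i j : Fin n), (∑ i' ∈ univ.filter (fun i' : Fin n => i' ≤ i), A i' j) = 0 ∨
    (∑ i' ∈ univ.filter (fun i' : Fin n => i' ≤ i), A i' j) = 1) ∧
  (∀ i : Fin n, (∑ j, A i j) = 1) ∧
  (∀ j : Fin n, (∑ i, A i j) = 1)

/-- `ν(A)`, the number of generalized inversions of `A`. -/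
def nuASM {n : ℕ} (A : Fin n → Fin n → ℤ) : ℕ :=
  (∑ i : Fin n, ∑ i' : Fin n, ∑ j : Fin n, ∑ j' : Fin n,
      if i < i' ∧ j' ≤ j then A i j * A i' j' else 0).toNat

/-- `μ(A)`, the number of entries of `A` equal to `-1`. -/
def muASM {n : ℕ} (A : Fin n → Fin n → ℤ) : ℕ :=
  (univ.filter (fun p : Fin n × Fin n => A p.1 p.2 = -1)).card

/-- `ρT(A)`, the number of `0`'s to the left of the `1` in the top row of `A`. -/
def rhoT {n : ℕ} (A : Fin n → Fin n → ℤ) : ℕ :=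
  (univ.filter (fun j : Fin n =>
    A ⟨0, j.pos⟩ j = 0 ∧ ∃ j' : Fin n, j < j' ∧ A ⟨0, j.pos⟩ j' = 1)).card

/-- `ρR(A)`, the number of `0`'s below the `1` in the right-most column of `A`. -/
def rhoR {n : ℕ} (A : Fin n → Fin n → ℤ) : ℕ :=
  (univ.filter (fun i : Fin n =>
    A i ⟨n - 1, Nat.sub_lt i.pos Nat.one_pos⟩ = 0 ∧
      ∃ i' : Fin n, i' < i ∧ A i' ⟨n - 1, Nat.sub_lt i.pos Nat.one_pos⟩ = 1)).card

/-- `ρB(A)`, the number of `0`'s to the right of the `1` in the bottom row of `A`. -/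
def rhoB {n : ℕ} (A : Fin n → Fin n → ℤ) : ℕ :=
  (univ.filter (fun j : Fin n =>
    A ⟨n - 1, Nat.sub_lt j.pos Nat.one_pos⟩ j = 0 ∧
      ∃ j' : Fin n, j' < j ∧ A ⟨n - 1, Nat.sub_lt j.pos Nat.one_pos⟩ j' = 1)).card

/-- `ρL(A)`, the number of `0`'s above the `1` in the left-most column of `A`. -/
def rhoL {n : ℕ} (A : Fin n → Fin n → ℤ) : ℕ :=
  (univ.filter (fun i : Fin n =>
    A i ⟨0, i.pos⟩ = 0 ∧ ∃ i' : Fin n, i < i' ∧ A i' ⟨0, i.pos⟩ = 1)).card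

open Classical in
/-- The quadruply-refined ASM generating function
`Zqua_n(x,y;z1,z2,z3,z4) = Σ_A x^{ν(A)} y^{μ(A)} z1^{ρT(A)} z2^{ρR(A)} z3^{ρB(A)} z4^{ρL(A)}`. -/
noncomputable def Zqua (n : ℕ) {R : Type*} [CommRing R] (x y z1 z2 z3 z4 : R) : R :=
  ∑ e : Fin n → Fin n → Fin 3,
    if IsASM (asmMat e) then
      x ^ nuASM (asmMat e) * y ^ muASM (asmMat e) * z1 ^ rhoT (asmMat e) *
        z2 ^ rhoR (asmMat e) * z3 ^ rhoB (asmMat e) * z4 ^ rhoL (asmMat e)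
    else 0

/-- Adjacent-boundary doubly-refined generating function `Zadj_n(x,y;z1,z2)`. -/
noncomputable def Zadj (n : ℕ) {R : Type*} [CommRing R] (x y z1 z2 : R) : R :=
  Zqua n x y z1 1 1 z2

/-- Alternative adjacent-boundary doubly-refined generating function `Zbaradj_n(x,y;z1,z2)`. -/
noncomputable def Zbaradj (n : ℕ) {R : Type*} [CommRing R] (x y z1 z2 : R) : R :=
  Zqua n x y z1 z2 1 1

/-- Triply-refined generating function `Ztri_n(x,y;z1,z2,z3)`. -/
noncomputable def Ztri (n : ℕ) {R : Type*} [CommRing R] (x y z1 z2 z3 : R) : R :=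
  Zqua n x y z1 1 z2 z3

/-- Opposite-boundary doubly-refined generating function `Zopp_n(x,y;z1,z2)`. -/
noncomputable def Zopp (n : ℕ) {R : Type*} [CommRing R] (x y z1 z2 : R) : R :=
  Zqua n x y z1 1 z2 1

/-- Singly-refined generating function `Z_n(x,y;z)`. -/
noncomputable def Zsing (n : ℕ) {R : Type*} [CommRing R] (x y z : R) : R :=
  Zqua n x y z 1 1 1

/-- Unrefined generating function `Z_n(x,y)`.  Note `Zun 0 x y = 1`. -/
noncomputable def Zun (n : ℕ) {R : Type*} [CommRing R] (x y : R) : R :=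
  Zqua n x y 1 1 1 1


open Classical in
/-- `A_n`, the number of alternating sign matrices of size `n`. -/
noncomputable def numASM (n : ℕ) : ℕ :=
  (univ.filter (fun e : Fin n → Fin n → Fin 3 => IsASM (asmMat e))).card

/-- The field of rational functions over `ℚ` in 3 variables. -/
noncomputable abbrev K3 : Type := FractionRing (MvPolynomial (Fin 3) ℚ)

noncomputable def vz1 : K3 := algebraMap (MvPolynomial (Fin 3) ℚ) K3 (MvPolynomial.X 0)
noncomputable def vz2 : K3 := algebraMap (MvPolynomial (Fin 3) ℚ) K3 (MvPolynomial.X 1)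
noncomputable def vz3 : K3 := algebraMap (MvPolynomial (Fin 3) ℚ) K3 (MvPolynomial.X 2)

section VertexModel

variable {R S : Type*} [CommRing R] [CommRing S]

/-- The partition function of a single row of `n` vertices with weights
`w j left top right bottom`. -/
def rowZ (n : ℕ) (w : Fin n → Bool → Bool → Bool → Bool → R) (l r : Bool) (t b : Fin n → Bool) : R :=
  ∑ h : Fin (n + 1) → Bool, if h 0 = l ∧ h (Fin.last n) = r then
    ∏ j, w j (h j.castSucc) (t j) (h j.succ) (b j) else 0

/-- The partition function of an `m × n` lattice of vertices with weights
`w i j left top right bottom` and prescribed boundary edges. -/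
def latticeZ (m n : ℕ) (w : Fin m → Fin n → Bool → Bool → Bool → Bool → R)
    (l r : Fin m → Bool) (t b : Fin n → Bool) : R :=
  ∑ h : Fin m → Fin (n + 1) → Bool, ∑ v : Fin (m + 1) → Fin n → Bool,
    if (∀ i, h i 0 = l i) ∧ (∀ i, h i (Fin.last n) = r i) ∧ v 0 = t ∧ v (Fin.last m) = b then
      ∏ i, ∏ j, w i j (h i j.castSucc) (v i.castSucc j) (h i j.succ) (v i.succ j) else 0

theorem rowZ_zero (w : Fin 0 → Bool → Bool → Bool → Bool → R) (l r : Bool) (t b : Fin 0 → Bool) :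
    rowZ 0 w l r t b = if l = r then 1 else 0 := by
  rw [rowZ, ← (Equiv.funUnique (Fin 1) Bool).symm.sum_comp]
  simp [ite_and]

theorem rowZ_succ (n : ℕ) (w : Fin (n + 1) → Bool → Bool → Bool → Bool → R) (l r : Bool)
    (t b : Fin (n + 1) → Bool) :
    rowZ (n + 1) w l r t b = ∑ m : Bool, w 0 l (t 0) m (b 0) *
      rowZ n (fun j => w j.succ) m r (fun j => t j.succ) (fun j => b j.succ) := by
  unfold rowZ
  rw [← (Fin.consEquiv (fun _ : Fin (n + 2) => Bool)).sum_comp, Fintype.sum_prod_type]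
  simp only [Fin.consEquiv_apply, Fin.cons_zero, mul_sum, mul_ite, mul_zero]
  rw [sum_comm, sum_comm (s := (univ : Finset Bool))]
  refine sum_congr rfl fun h _ => ?_
  rw [Fintype.sum_eq_single l (fun x hx => by simp [hx]),
    Fintype.sum_eq_single (h 0) (fun x hx => by simp [Ne.symm hx])]
  simp [Fin.prod_univ_succ, ← Fin.succ_last]

theorem latticeZ_succ (m n : ℕ) (w : Fin (m + 1) → Fin n → Bool → Bool → Bool → Bool → R)
    (l r : Fin (m + 1) → Bool) (t b : Fin n → Bool) :
    latticeZ (m + 1) n w l r t b = ∑ s : Fin n → Bool, rowZ n (w 0) (l 0) (r 0) t s *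
      latticeZ m n (fun i => w i.succ) (fun i => l i.succ) (fun i => r i.succ) s b := by
  unfold rowZ latticeZ
  rw [← (Fin.consEquiv (fun _ : Fin (m + 1) => Fin (n + 1) → Bool)).sum_comp,
    Fintype.sum_prod_type]
  simp only [← (Fin.consEquiv (fun _ : Fin (m + 2) => Fin n → Bool)).sum_comp,
    Fintype.sum_prod_type]
  simp only [Fin.consEquiv_apply, Fin.cons_zero, sum_mul]
  simp only [mul_sum]
  rw [sum_comm (s := (univ : Finset (Fin n → Bool)))]
  refine sum_congr rfl fun h _ => ?_
  rw [sum_comm (s := (univ : Finset (Fin n → Bool)))]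
  refine sum_congr rfl fun h' _ => ?_
  rw [sum_comm (s := (univ : Finset (Fin n → Bool))),
    sum_comm (s := (univ : Finset (Fin n → Bool)))]
  refine sum_congr rfl fun v _ => ?_
  rw [Fintype.sum_eq_single t (fun x hx => by simp [hx]),
    Fintype.sum_eq_single (v 0) (fun x hx => by simp [Ne.symm hx])]
  rw [Fin.prod_univ_succ, ite_zero_mul_ite_zero]
  simp only [Fin.forall_fin_succ, Fin.cons_zero, Fin.cons_succ, ← Fin.succ_last, Fin.castSucc_zero,
    ← Fin.succ_castSucc]
  refine if_congr (by tauto) rfl rfl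

theorem latticeZ_transpose (m n : ℕ) (w : Fin m → Fin n → Bool → Bool → Bool → Bool → R)
    (l r : Fin m → Bool) (t b : Fin n → Bool) :
    latticeZ m n w l r t b = latticeZ n m (fun j i l t r b => w i j t l b r) t b l r := by
  unfold latticeZ
  rw [← (Equiv.piComm (fun (_ : Fin (n + 1)) (_ : Fin m) => Bool)).sum_comp]
  simp only [← (Equiv.piComm (fun (_ : Fin n) (_ : Fin (m + 1)) => Bool)).sum_comp]
  rw [sum_comm]
  refine sum_congr rfl fun h _ => sum_congr rfl fun v _ => ?_
  rw [prod_comm]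
  simp only [Equiv.piComm_apply, funext_iff, Function.swap]
  refine if_congr (by tauto) rfl rfl

theorem latticeZ_flip (m n : ℕ) (w : Fin m → Fin n → Bool → Bool → Bool → Bool → R)
    (l r : Fin m → Bool) (t b : Fin n → Bool) :
    latticeZ m n w l r t b = latticeZ m n (fun i j l t r b => w i.rev j l (!b) r (!t))
      (fun i => l i.rev) (fun i => r i.rev) (fun j => !b j) (fun j => !t j) := by
  have hh : Function.Involutive (fun (h : Fin m → Fin (n + 1) → Bool) i => h i.rev) :=
    fun h => by simp
  have hv : Function.Involutive (fun (v : Fin (m + 1) → Fin n → Bool) k j => !v k.rev j) :=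
    fun v => by simp
  unfold latticeZ
  refine Fintype.sum_equiv hh.toPerm _ _ fun h => Fintype.sum_equiv hv.toPerm _ _ fun v => ?_
  rw [← Equiv.prod_comp (Fin.revPerm (n := m))]
  simp only [Function.Involutive.coe_toPerm, Fin.revPerm_apply, Fin.rev_zero,
    Fin.rev_last, Fin.rev_castSucc, Fin.rev_succ, Bool.not_not, funext_iff, Bool.not_inj_iff]
  have key : ∀ p : Fin m → Prop, (∀ i : Fin m, p i.rev) ↔ ∀ i, p i := fun p =>
    ⟨fun H i => by simpa using H i.rev, fun H i => H _⟩
  refine if_congr ?_ rfl rfl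
  rw [← key (fun i => h i 0 = l i), ← key (fun i => h i (Fin.last n) = r i)]
  tauto

theorem map_latticeZ (f : R →+* S) (m n : ℕ) (w : Fin m → Fin n → Bool → Bool → Bool → Bool → R)
    (l r : Fin m → Bool) (t b : Fin n → Bool) :
    f (latticeZ m n w l r t b) = latticeZ m n (fun i j x y z u => f (w i j x y z u)) l r t b := by
  simp only [latticeZ, map_sum, apply_ite f, map_prod, map_zero]

end VertexModel

section SixVertex

variable {R S : Type*} [CommRing R] [CommRing S]

/-- The six-vertex weights. The edges of a vertex are given in the order left, top, right, bottom. -/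
def sixV (α β γ δ : R) : Bool → Bool → Bool → Bool → R
  | false, false, false, false => α
  | true, true, true, true => α
  | false, true, false, true => β
  | true, false, true, false => β
  | false, false, true, true => γ
  | true, true, false, false => δ
  | _, _, _, _ => 0

theorem sixV_transpose (α β γ δ : R) (l t r b : Bool) :
    sixV α β γ δ t l b r = sixV α β γ δ l t r b := by
  revert l t r b; simp [sixV]

theorem sixV_flip (α β γ δ : R) (l t r b : Bool) :
    sixV α β γ δ l (!b) r (!t) = sixV β α γ δ l t r b := by
  revert l t r b; simp [sixV]

theorem map_sixV (f : R →+* S) (α β γ δ : R) (l t r b : Bool) :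
    f (sixV α β γ δ l t r b) = sixV (f α) (f β) (f γ) (f δ) l t r b := by
  revert l t r b; simp [sixV]

/-- The partition function of the six-vertex model with domain wall boundary conditions. -/
def dwZ (n : ℕ) (α β γ δ : Fin n → Fin n → R) : R :=
  latticeZ n n (fun i j => sixV (α i j) (β i j) (γ i j) (δ i j)) (fun _ => false) (fun _ => true)
    (fun _ => false) (fun _ => true)

theorem dwZ_transpose (n : ℕ) (α β γ δ : Fin n → Fin n → R) :
    dwZ n α β γ δ = dwZ n (fun i j => α j i) (fun i j => β j i) (fun i j => γ j i)
      (fun i j => δ j i) := by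
  unfold dwZ
  rw [latticeZ_transpose]
  simp only [sixV_transpose]

theorem dwZ_flip (n : ℕ) (α β γ δ : Fin n → Fin n → R) :
    dwZ n α β γ δ = dwZ n (fun i j => β i.rev j) (fun i j => α i.rev j) (fun i j => γ i.rev j)
      (fun i j => δ i.rev j) := by
  unfold dwZ
  rw [latticeZ_flip]
  simp only [sixV_flip, Bool.not_true, Bool.not_false]

theorem map_dwZ (f : R →+* S) (n : ℕ) (α β γ δ : Fin n → Fin n → R) :
    f (dwZ n α β γ δ) = dwZ n (fun i j => f (α i j)) (fun i j => f (β i j)) (fun i j => f (γ i j))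
      (fun i j => f (δ i j)) := by
  simp only [dwZ, map_latticeZ, map_sixV]

/-- The weights of a vertex with row parameter `x` and column parameter `y`, for a primitive cube
root of unity `ω`. -/
def cubicV (ω x y : R) : Bool → Bool → Bool → Bool → R :=
  sixV (y - ω ^ 2 * x) (x - ω ^ 2 * y) (1 - ω ^ 2) ((1 - ω ^ 2) * x * y)

/-- The two-row intertwiner. -/
def intertwiner (ω x x' : R) : Bool → Bool → Bool → Bool → R
  | false, false, false, false => x' - ω ^ 2 * x
  | true, true, true, true => x' - ω ^ 2 * x
  | false, true, false, true => (1 - ω ^ 2) * x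
  | true, false, true, false => (1 - ω ^ 2) * x'
  | false, true, true, false => ω * (x - x')
  | true, false, false, true => ω * (x - x')
  | _, _, _, _ => 0

theorem intertwiner_cubicV (ω x x' y : R) (hω : ω ^ 2 + ω + 1 = 0) (l l' t r r' b : Bool) :
    ∑ m, ∑ m', intertwiner ω x x' l l' m m' *
        ∑ s, cubicV ω x y m t r s * cubicV ω x' y m' s r' b =
      ∑ m, ∑ m', (∑ s, cubicV ω x' y l t m s * cubicV ω x y l' s m' b) *
        intertwiner ω x x' m m' r r' := by
  have h2 : ω ^ 2 = -ω - 1 := by linear_combination hω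
  simp only [Fintype.sum_bool, cubicV, h2]
  cases l <;> cases l' <;> cases t <;> cases r <;> cases r' <;> cases b <;>
  simp only [intertwiner, sixV, zero_mul, mul_zero, add_zero, zero_add, h2] <;>
  first
    | done
    | ring1
    | grind

/-- The product of the row transfer matrices with parameters `x` and `x'`. -/
def twoRowZ (ω : R) (n : ℕ) (x x' : R) (y : Fin n → R) (l l' r r' : Bool) (t b : Fin n → Bool) : R :=
  ∑ s : Fin n → Bool, rowZ n (fun j => cubicV ω x (y j)) l r t s *
    rowZ n (fun j => cubicV ω x' (y j)) l' r' s b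

theorem twoRowZ_zero (ω x x' : R) (y : Fin 0 → R) (l l' r r' : Bool) (t b : Fin 0 → Bool) :
    twoRowZ ω 0 x x' y l l' r r' t b = if l = r ∧ l' = r' then 1 else 0 := by
  simp only [twoRowZ, rowZ_zero, Finset.univ_unique, sum_singleton, ite_zero_mul_ite_zero, mul_one]

theorem twoRowZ_succ (ω : R) (n : ℕ) (x x' : R) (y : Fin (n + 1) → R) (l l' r r' : Bool)
    (t b : Fin (n + 1) → Bool) :
    twoRowZ ω (n + 1) x x' y l l' r r' t b = ∑ m, ∑ m',
      (∑ s, cubicV ω x (y 0) l (t 0) m s * cubicV ω x' (y 0) l' s m' (b 0)) *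
        twoRowZ ω n x x' (fun j => y j.succ) m m' r r' (fun j => t j.succ) (fun j => b j.succ) := by
  unfold twoRowZ
  rw [← (Fin.consEquiv (fun _ : Fin (n + 1) => Bool)).sum_comp, Fintype.sum_prod_type]
  simp only [Fin.consEquiv_apply, rowZ_succ, Fin.cons_zero, Fin.cons_succ, Fintype.sum_bool]
  simp only [mul_sum, ← sum_add_distrib]
  refine sum_congr rfl fun s _ => ?_
  ring

theorem intertwiner_twoRowZ (ω : R) (hω : ω ^ 2 + ω + 1 = 0) (n : ℕ) (x x' : R) :
    ∀ (y : Fin n → R) (l l' r r' : Bool) (t b : Fin n → Bool),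
    ∑ m, ∑ m', intertwiner ω x x' l l' m m' * twoRowZ ω n x x' y m m' r r' t b =
      ∑ m, ∑ m', twoRowZ ω n x' x y l l' m m' t b * intertwiner ω x x' m m' r r' := by
  induction n with
  | zero =>
    intro y l l' r r' t b
    simp only [twoRowZ_zero]
    cases l <;> cases l' <;> cases r <;> cases r' <;> simp
  | succ n ih =>
    intro y l l' r r' t b
    simp only [twoRowZ_succ]
    have key := fun k k' => intertwiner_cubicV ω x x' (y 0) hω l l' (t 0) k k' (b 0)
    have ih' := fun k k' => ih (fun j => y j.succ) k k' r r' (fun j => t j.succ) (fun j => b j.succ)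
    generalize hM : (fun l l' m m' => ∑ s, cubicV ω x (y 0) l (t 0) m s *
      cubicV ω x' (y 0) l' s m' (b 0)) = M at *
    generalize hN : (fun l l' m m' => ∑ s, cubicV ω x' (y 0) l (t 0) m s *
      cubicV ω x (y 0) l' s m' (b 0)) = N at *
    have hM' := fun l l' m m' => congrFun (congrFun (congrFun (congrFun hM l) l') m) m'
    have hN' := fun l l' m m' => congrFun (congrFun (congrFun (congrFun hN l) l') m) m'
    simp only [hM', hN'] at *
    calc _ = ∑ k, ∑ k', (∑ m, ∑ m', intertwiner ω x x' l l' m m' * M m m' k k') *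
          twoRowZ ω n x x' (fun j => y j.succ) k k' r r' (fun j => t j.succ)
            (fun j => b j.succ) := by
          simp only [Fintype.sum_bool]; ring
      _ = ∑ k, ∑ k', N l l' k k' * (∑ m, ∑ m', intertwiner ω x x' k k' m m' *
          twoRowZ ω n x x' (fun j => y j.succ) m m' r r' (fun j => t j.succ)
            (fun j => b j.succ)) := by
          simp only [key]; simp only [Fintype.sum_bool]; ring
      _ = _ := by simp only [ih']; simp only [Fintype.sum_bool]; ring

theorem mul_twoRowZ_comm (ω : R) (hω : ω ^ 2 + ω + 1 = 0) (n : ℕ) (x x' : R)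
    (y : Fin n → R) (t b : Fin n → Bool) :
    (x' - ω ^ 2 * x) * twoRowZ ω n x x' y false false true true t b =
      (x' - ω ^ 2 * x) * twoRowZ ω n x' x y false false true true t b := by
  have := intertwiner_twoRowZ ω hω n x x' y false false true true t b
  simpa [intertwiner, mul_comm] using this

end SixVertex

section Symmetry

variable {R S : Type*} [CommRing R] [CommRing S]

theorem map_cubicV (f : R →+* S) (ω x y : R) (l t r b : Bool) :
    f (cubicV ω x y l t r b) = cubicV (f ω) (f x) (f y) l t r b := by
  simp [cubicV, map_sixV]

theorem map_twoRowZ (f : R →+* S) (ω : R) (n : ℕ) (x x' : R) (y : Fin n → R) (l l' r r' : Bool)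
    (t b : Fin n → Bool) :
    f (twoRowZ ω n x x' y l l' r r' t b) =
      twoRowZ (f ω) n (f x) (f x') (fun j => f (y j)) l l' r r' t b := by
  simp only [twoRowZ, rowZ, map_sum, map_mul, apply_ite f, map_prod, map_zero, map_cubicV]

theorem twoRowZ_comm (ω : R) (hω : ω ^ 2 + ω + 1 = 0) (n : ℕ) (x x' : R)
    (y : Fin n → R) (t b : Fin n → Bool) :
    twoRowZ ω n x x' y false false true true t b =
      twoRowZ ω n x' x y false false true true t b := by
  open Polynomial in
  have h := mul_twoRowZ_comm (C ω) (by simp [← C_pow, ← C_add, ← C_1, hω, -map_one, -map_add, -map_pow]) n (C x) (X + C x')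
    (fun j => C (y j)) t b
  have hreg : IsLeftRegular (X + C x' - C ω ^ 2 * C x) := by
    have : X + C x' - C ω ^ 2 * C x = X + C (x' - ω ^ 2 * x) := by simp; ring
    rw [this]
    exact (monic_X_add_C _).isRegular.left
  have h' := congrArg (evalRingHom 0) (hreg h)
  simpa [map_twoRowZ, coe_evalRingHom] using h'

/-- The partition function of the six-vertex model with weights `cubicV` on a rectangle. -/
def rectZ (ω : R) (m n : ℕ) (x : Fin m → R) (y : Fin n → R) (t b : Fin n → Bool) : R :=
  latticeZ m n (fun i j => cubicV ω (x i) (y j)) (fun _ => false) (fun _ => true) t b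

theorem rectZ_succ (ω : R) (m n : ℕ) (x : Fin (m + 1) → R) (y : Fin n → R) (t b : Fin n → Bool) :
    rectZ ω (m + 1) n x y t b = ∑ s : Fin n → Bool,
      rowZ n (fun j => cubicV ω (x 0) (y j)) false true t s *
        rectZ ω m n (fun i => x i.succ) y s b :=
  latticeZ_succ ..

theorem rectZ_succ_succ (ω : R) (m n : ℕ) (x : Fin (m + 2) → R) (y : Fin n → R)
    (t b : Fin n → Bool) :
    rectZ ω (m + 2) n x y t b = ∑ s : Fin n → Bool,
      twoRowZ ω n (x 0) (x 1) y false false true true t s *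
        rectZ ω m n (fun i => x i.succ.succ) y s b := by
  simp only [rectZ_succ, twoRowZ, sum_mul, mul_sum]
  rw [sum_comm]
  refine sum_congr rfl fun s _ => sum_congr rfl fun s' _ => ?_
  rw [mul_assoc]
  rfl

theorem rectZ_comp_swap (ω : R) (hω : ω ^ 2 + ω + 1 = 0) (n : ℕ) (y : Fin n → R)
    (b : Fin n → Bool) (m : ℕ) : ∀ (x : Fin (m + 1) → R) (t : Fin n → Bool) (i : Fin m),
    rectZ ω (m + 1) n (x ∘ Equiv.swap i.castSucc i.succ) y t b = rectZ ω (m + 1) n x y t b := by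
  induction m with
  | zero => intro x t i; exact i.elim0
  | succ m ih =>
    intro x t i
    cases i using Fin.cases with
    | zero =>
      rw [rectZ_succ_succ, rectZ_succ_succ]
      refine sum_congr rfl fun s _ => ?_
      rw [twoRowZ_comm ω hω]
      congr 2
    | succ i =>
      rw [rectZ_succ, rectZ_succ]
      refine sum_congr rfl fun s _ => ?_
      have h0 : (Equiv.swap i.succ.castSucc i.succ.succ) 0 = 0 := by
        rw [Equiv.swap_apply_of_ne_of_ne] <;> simp [Fin.ext_iff]
      simp only [Function.comp_apply, h0]
      rw [← ih _ _ i]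
      congr 2
      funext k
      simp only [Function.comp_apply]
      congr 1
      simp only [Equiv.swap_apply_def, Fin.ext_iff]
      grind

theorem rectZ_comp_perm (ω : R) (hω : ω ^ 2 + ω + 1 = 0) (m n : ℕ) (x : Fin m → R) (y : Fin n → R)
    (t b : Fin n → Bool) (σ : Equiv.Perm (Fin m)) :
    rectZ ω m n (x ∘ σ) y t b = rectZ ω m n x y t b := by
  cases m with
  | zero => congr 1; exact Subsingleton.elim _ _
  | succ m =>
    have hσ : σ ∈ Submonoid.closure (Set.range fun i : Fin m => Equiv.swap i.castSucc i.succ) := by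
      rw [Equiv.Perm.mclosure_swap_castSucc_succ]; trivial
    induction hσ using Submonoid.closure_induction generalizing x with
    | mem τ h =>
      obtain ⟨i, rfl⟩ := h
      exact rectZ_comp_swap ω hω n y b m x t i
    | one => rfl
    | mul τ τ' _ _ h h' =>
      rw [Equiv.Perm.coe_mul, ← Function.comp_assoc, h', h]

/-- The domain wall partition function with weights `cubicV`. -/
def cubicZ (ω : R) (n : ℕ) (x y : Fin n → R) : R :=
  dwZ n (fun i j => y j - ω ^ 2 * x i) (fun i j => x i - ω ^ 2 * y j) (fun _ _ => 1 - ω ^ 2)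
    (fun i j => (1 - ω ^ 2) * x i * y j)

theorem map_cubicZ (f : R →+* S) (ω : R) (n : ℕ) (x y : Fin n → R) :
    f (cubicZ ω n x y) = cubicZ (f ω) n (fun i => f (x i)) (fun j => f (y j)) := by
  simp [cubicZ, map_dwZ]

theorem cubicZ_comp_left (ω : R) (hω : ω ^ 2 + ω + 1 = 0) (n : ℕ) (x y : Fin n → R)
    (σ : Equiv.Perm (Fin n)) : cubicZ ω n (x ∘ σ) y = cubicZ ω n x y :=
  rectZ_comp_perm ω hω n n x y _ _ σ

theorem cubicZ_comm (ω : R) (hω : ω ^ 2 + ω + 1 = 0) (n : ℕ) (x y : Fin n → R) :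
    cubicZ ω n x y = cubicZ ω n y x := by
  rw [cubicZ, dwZ_transpose, dwZ_flip, ← cubicZ_comp_left ω hω n y x Fin.revPerm]
  simp only [cubicZ, Function.comp_apply, Fin.revPerm_apply]
  congr! 3
  ring

end Symmetry

section Corner

variable {R : Type*} [CommRing R]

theorem rowZ_sixV_true (n : ℕ) : ∀ (α β γ δ : Fin n → R) (r : Bool) (s : Fin n → Bool),
    rowZ n (fun j => sixV (α j) (β j) (γ j) (δ j)) true r (fun _ => false) s =
      if r = true ∧ s = fun _ => false then ∏ j, β j else 0 := by
  induction n with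
  | zero =>
    intro α β γ δ r s
    rw [rowZ_zero]
    have : s = fun _ => false := Subsingleton.elim _ _
    cases r <;> simp [this]
  | succ n ih =>
    intro α β γ δ r s
    rw [rowZ_succ]
    simp only [Fintype.sum_bool, ih]
    have hs : (s = fun _ => false) ↔ s 0 = false ∧ (fun j : Fin n => s j.succ) = fun _ => false := by
      simp [funext_iff, Fin.forall_fin_succ]
    simp only [hs, Fin.prod_univ_succ]
    cases s 0 <;> cases r <;> simp [sixV]

theorem dwZ_succ (n : ℕ) (α β γ δ : Fin (n + 1) → Fin (n + 1) → R) :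
    dwZ (n + 1) α β γ δ = ∑ s : Fin (n + 1) → Bool,
      (∑ m, sixV (α 0 0) (β 0 0) (γ 0 0) (δ 0 0) false false m (s 0) *
        rowZ n (fun j => sixV (α 0 j.succ) (β 0 j.succ) (γ 0 j.succ) (δ 0 j.succ)) m true
          (fun _ => false) (fun j => s j.succ)) *
      latticeZ n (n + 1) (fun i j => sixV (α i.succ j) (β i.succ j) (γ i.succ j) (δ i.succ j))
        (fun _ => false) (fun _ => true) s (fun _ => true) := by
  rw [dwZ, latticeZ_succ]
  simp only [rowZ_succ]

theorem dwZ_corner (n : ℕ) (α β γ δ : Fin (n + 1) → Fin (n + 1) → R) (h : α 0 0 = 0) :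
    dwZ (n + 1) α β γ δ = γ 0 0 * (∏ j : Fin n, β 0 j.succ) * (∏ i : Fin n, β i.succ 0) *
      dwZ n (fun i j => α i.succ j.succ) (fun i j => β i.succ j.succ) (fun i j => γ i.succ j.succ)
        (fun i j => δ i.succ j.succ) := by
  have key : latticeZ n (n + 1)
      (fun i j => sixV (α i.succ j) (β i.succ j) (γ i.succ j) (δ i.succ j))
      (fun _ => false) (fun _ => true) (Fin.cons true fun _ => false) (fun _ => true) =
      (∏ i : Fin n, β i.succ 0) *
      dwZ n (fun i j => α i.succ j.succ) (fun i j => β i.succ j.succ) (fun i j => γ i.succ j.succ)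
        (fun i j => δ i.succ j.succ) := by
    rw [latticeZ_transpose]
    simp only [sixV_transpose]
    rw [latticeZ_succ, Fintype.sum_eq_single (fun _ => false)]
    · simp only [Fin.cons_zero, Fin.cons_succ, rowZ_sixV_true, and_self, if_true]
      rw [dwZ, latticeZ_transpose]
      simp only [sixV_transpose]
    · intro s hs
      simp only [Fin.cons_zero, rowZ_sixV_true, hs, and_false, if_false, zero_mul]
  rw [dwZ_succ, mul_assoc, ← key, Fintype.sum_eq_single (Fin.cons true fun _ => false)]
  · simp [sixV, rowZ_sixV_true]
  · intro s hs
    have hs' : ¬ (s 0 = true ∧ (fun j : Fin n => s j.succ) = fun _ => false) := by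
      rintro ⟨h1, h2⟩
      apply hs
      rw [← Fin.cons_self_tail s, h1]
      congr 1
    simp only [Fintype.sum_bool, rowZ_sixV_true, h, true_and]
    cases h0 : s 0
    · simp [sixV]
    · have : ¬ ((fun j : Fin n => s j.succ) = fun _ => false) := fun h2 => hs' ⟨h0, h2⟩
      simp [sixV, this]

theorem dwZ_corner' (n : ℕ) (α β γ δ : Fin (n + 1) → Fin (n + 1) → R) (h : β (Fin.last n) 0 = 0) :
    dwZ (n + 1) α β γ δ = γ (Fin.last n) 0 * (∏ j : Fin n, α (Fin.last n) j.succ) *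
      (∏ i : Fin n, α i.castSucc 0) *
      dwZ n (fun i j => α i.castSucc j.succ) (fun i j => β i.castSucc j.succ)
        (fun i j => γ i.castSucc j.succ) (fun i j => δ i.castSucc j.succ) := by
  rw [dwZ_flip, dwZ_corner _ _ _ _ _ (by simpa using h), dwZ_flip n]
  simp only [Fin.rev_zero, Fin.rev_succ, Fin.rev_rev]
  congr 2
  exact Fintype.prod_equiv Fin.revPerm _ _ fun i => by simp

theorem dwZ_affine (n : ℕ) (α α' α'' β γ δ : Fin (n + 1) → Fin (n + 1) → R)
    (h : ∀ i j, (i ≠ 0 ∨ j ≠ 0) → α' i j = α i j ∧ α'' i j = α i j)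
    (h' : α' 0 0 = 1) (h'' : α'' 0 0 = 0) :
    dwZ (n + 1) α β γ δ = α 0 0 * dwZ (n + 1) α' β γ δ + (1 - α 0 0) * dwZ (n + 1) α'' β γ δ := by
  simp only [dwZ_succ, mul_sum, ← sum_add_distrib]
  refine sum_congr rfl fun s _ => ?_
  have h1 := fun (i : Fin n) j => (h i.succ j (Or.inl (Fin.succ_ne_zero i))).1
  have h2 := fun (i : Fin n) j => (h i.succ j (Or.inl (Fin.succ_ne_zero i))).2
  have h3 := fun (j : Fin n) => (h 0 j.succ (Or.inr (Fin.succ_ne_zero j))).1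
  have h4 := fun (j : Fin n) => (h 0 j.succ (Or.inr (Fin.succ_ne_zero j))).2
  simp only [h1, h2, h3, h4, h', h'', Fintype.sum_bool]
  cases s 0 <;> simp only [sixV] <;> ring

theorem dwZ_affine' (n : ℕ) (α β β' β'' γ δ : Fin (n + 1) → Fin (n + 1) → R)
    (h : ∀ i j, (i ≠ Fin.last n ∨ j ≠ 0) → β' i j = β i j ∧ β'' i j = β i j)
    (h' : β' (Fin.last n) 0 = 1) (h'' : β'' (Fin.last n) 0 = 0) :
    dwZ (n + 1) α β γ δ = β (Fin.last n) 0 * dwZ (n + 1) α β' γ δ +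
      (1 - β (Fin.last n) 0) * dwZ (n + 1) α β'' γ δ := by
  rw [dwZ_flip, dwZ_flip _ _ β', dwZ_flip _ _ β'',
    dwZ_affine n (fun i j => β i.rev j) (fun i j => β' i.rev j) (fun i j => β'' i.rev j)]
  · simp
  · intro i j hij
    apply h
    refine hij.imp_left fun hi hi' => hi ?_
    rw [← Fin.rev_rev i, hi', Fin.rev_last]
  · simpa using h'
  · simpa using h''

theorem dwZ_rotate (n : ℕ) (α β γ δ : Fin n → Fin n → R) :
    dwZ n α β γ δ = dwZ n (fun i j => α i.rev j.rev) (fun i j => β i.rev j.rev)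
      (fun i j => γ i.rev j.rev) (fun i j => δ i.rev j.rev) := by
  rw [dwZ_flip, dwZ_transpose, dwZ_flip, dwZ_transpose]

end Corner

section Gauge

variable {K : Type*} [Field K]

theorem prod_succ_div_castSucc (n : ℕ) (f : Fin (n + 1) → K) (hf : ∀ i, f i ≠ 0) :
    ∏ i : Fin n, f i.succ / f i.castSucc = f (Fin.last n) / f 0 := by
  induction n with
  | zero => simp [hf]
  | succ n ih =>
    rw [Fin.prod_univ_castSucc]
    have := ih (fun i => f i.castSucc) fun i => hf _
    simp only [← Fin.succ_castSucc] at this ⊢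
    rw [this, Fin.castSucc_zero, Fin.succ_last, div_mul_div_comm, mul_comm, mul_div_mul_right _ _ (hf _)]

theorem dwZ_gauge (n : ℕ) (α β γ δ α' β' γ' δ' C : Fin n → Fin n → K) (g h : Fin n → K)
    (hg : ∀ i, g i ≠ 0) (hh : ∀ j, h j ≠ 0)
    (hα : ∀ i j : Fin n, ((i : ℕ) + 1 ≠ n ∨ (j : ℕ) ≠ 0) → α' i j = C i j * α i j)
    (hβ : ∀ i j : Fin n, ((i : ℕ) ≠ 0 ∨ (j : ℕ) ≠ 0) → β' i j = C i j * β i j)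
    (hγ : ∀ i j, γ' i j = C i j * g i * h j * γ i j)
    (hδ : ∀ i j : Fin n, (i : ℕ) ≠ 0 → (i : ℕ) + 1 ≠ n → (j : ℕ) ≠ 0 →
      g i * h j * δ' i j = C i j * δ i j) :
    dwZ n α' β' γ' δ' = (∏ i, ∏ j, C i j) * (∏ i, g i) * (∏ j, h j) * dwZ n α β γ δ := by
  unfold dwZ latticeZ
  simp only [mul_sum]
  refine sum_congr rfl fun e _ => sum_congr rfl fun v _ => ?_
  split_ifs with H
  swap
  · simp
  obtain ⟨h1, h2, h3, h4⟩ := H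
  have e1 : ∀ i, ∏ j : Fin n, (if e i j.succ then g i else 1) / (if e i j.castSucc then g i else 1)
      = g i := by
    intro i
    rw [prod_succ_div_castSucc n (fun k => if e i k then g i else 1)]
    · simp [h1, h2]
    · intro k; split_ifs <;> simp [hg]
  have e2 : ∀ j, ∏ i : Fin n, (if v i.succ j then h j else 1) / (if v i.castSucc j then h j else 1)
      = h j := by
    intro j
    rw [prod_succ_div_castSucc n (fun k => if v k j then h j else 1)]
    · simp [h3, h4]
    · intro k; split_ifs <;> simp [hh]
  rw [← prod_congr rfl (fun i _ => e1 i), ← prod_congr rfl (fun j _ => e2 j)]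
  rw [prod_comm (s := univ) (t := univ) (f := fun j i => (if v (Fin.succ i) j then h j else 1) / _)]
  simp only [← prod_mul_distrib]
  refine prod_congr rfl fun i _ => prod_congr rfl fun j _ => ?_
  have c1 : (j : ℕ) = 0 → e i j.castSucc = false := by
    intro hj
    rw [← h1 i]; congr 1; ext; simpa using hj
  have c3 : (i : ℕ) = 0 → v i.castSucc j = false := by
    intro hj
    rw [show i.castSucc = 0 by ext; simpa using hj, h3]
  have c4 : (i : ℕ) + 1 = n → v i.succ j = true := by
    intro hj
    rw [show i.succ = Fin.last n by ext; simpa using hj, h4]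
  have hα := hα i j
  have hβ := hβ i j
  have hγ := hγ i j
  have hδ := hδ i j
  have hgi := hg i
  have hhj := hh j
  generalize e i j.castSucc = l at *
  generalize e i j.succ = r at *
  generalize v i.castSucc j = t at *
  generalize v i.succ j = b at *
  cases l <;> cases r <;> cases t <;> cases b <;> simp [sixV] at * <;> grind

end Gauge

section Sparse

variable {R S : Type*} [CommRing R] [CommRing S]

theorem sum_range_three_mul {M : Type*} [AddCommMonoid M] (f : ℕ → M) (N : ℕ) :
    ∑ i ∈ range (3 * N), f i = ∑ k ∈ range N, (f (3 * k) + f (3 * k + 1) + f (3 * k + 2)) := by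
  induction N with
  | zero => simp
  | succ N ih =>
    rw [sum_range_succ, ← ih, show 3 * (N + 1) = 3 * N + 1 + 1 + 1 by ring]
    simp only [sum_range_succ]
    abel

/-- Polynomials of degree less than `3 * m` whose coefficients at the exponents congruent to `2`
modulo `3` vanish. -/
def sparsePoly (R : Type*) [CommRing R] (m : ℕ) : Submodule R (Polynomial R) where
  carrier := {P | ∀ k, 3 * m ≤ k ∨ k % 3 = 2 → P.coeff k = 0}
  add_mem' hP hQ k hk := by rw [Polynomial.coeff_add, hP k hk, hQ k hk, add_zero]
  zero_mem' k _ := Polynomial.coeff_zero k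
  smul_mem' c P hP k hk := by rw [Polynomial.coeff_smul, hP k hk, smul_zero]

theorem mem_sparsePoly_of_eval [IsDomain R] (h3 : (3 : R) ≠ 0) (ω : R) (hω : ω ^ 2 + ω + 1 = 0)
    (m : ℕ) (P : Polynomial R) (hP : P.natDegree < 3 * m) (y : Fin m → R)
    (hy0 : ∀ j, y j ≠ 0) (hy : Function.Injective fun j => y j ^ 3)
    (h : ∀ j, P.eval (y j) + ω * P.eval (ω * y j) + ω ^ 2 * P.eval (ω ^ 2 * y j) = 0) :
    P ∈ sparsePoly R m := by
  have hω3 : ω ^ 3 = 1 := by linear_combination (ω - 1) * hω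
  let H : Polynomial R := ∑ k ∈ range m, Polynomial.monomial k (P.coeff (3 * k + 2))
  have hH : ∀ j, H.eval (y j ^ 3) = 0 := by
    intro j
    have e := h j
    simp only [Polynomial.eval_eq_sum_range' hP, sum_range_three_mul, mul_sum,
      ← sum_add_distrib] at e
    have : 3 * y j ^ 2 * H.eval (y j ^ 3) = 0 := by
      rw [← e, Polynomial.eval_finsetSum, mul_sum]
      refine sum_congr rfl fun k _ => ?_
      have p1 : ω ^ (3 * k) = 1 := by rw [pow_mul, hω3, one_pow]
      have p2 : (ω ^ 2) ^ (3 * k) = 1 := by rw [← pow_mul, mul_comm, pow_mul, p1, one_pow]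
      simp only [Polynomial.eval_monomial, mul_pow, pow_add, p1, p2, ← pow_mul]
      rw [show ω ^ (2 * 2) = ω ^ 3 * ω by ring, hω3]
      linear_combination (-(P.coeff (3 * k)) * y j ^ (3 * k) - P.coeff (3 * k + 1) * y j ^ (3 * k) *
        y j * (ω ^ 2 - ω + 1) - P.coeff (3 * k + 2) * y j ^ (3 * k) * y j ^ 2 * 2 * (ω - 1)) * hω
    simpa [h3, hy0 j] using this
  have hdeg : H.natDegree < Fintype.card (Fin m) := by
    rw [Fintype.card_fin]
    have hm : 0 < m := by omega
    refine (Nat.lt_iff_le_pred hm).2 (Polynomial.natDegree_sum_le_of_forall_le _ _ fun k hk => ?_)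
    have := mem_range.1 hk
    exact (Polynomial.natDegree_monomial_le _).trans (by omega)
  have hH0 := Polynomial.eq_zero_of_natDegree_lt_card_of_eval_eq_zero H hy hH hdeg
  intro k hk
  by_cases hk' : 3 * m ≤ k
  · exact Polynomial.coeff_eq_zero_of_natDegree_lt (by omega)
  · obtain ⟨q, rfl⟩ : ∃ q, k = 3 * q + 2 := ⟨k / 3, by omega⟩
    have := congrArg (fun p => p.coeff q) hH0
    simp only [H, Polynomial.finsetSum_coeff, Polynomial.coeff_monomial, sum_ite_eq', mem_range,
      Polynomial.coeff_zero] at this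
    rw [if_pos (by omega)] at this
    exact this

theorem natDegree_rowZ_le (n : ℕ) : ∀ (α β γ δ : Fin n → Polynomial R)
    (_ : ∀ j, (α j).natDegree ≤ 1) (_ : ∀ j, (β j).natDegree ≤ 1) (_ : ∀ j, (γ j).natDegree ≤ 1)
    (l r : Bool) (s : Fin n → Bool),
    (rowZ n (fun j => sixV (α j) (β j) (γ j) (δ j)) l r (fun _ => false) s).natDegree ≤ n := by
  induction n with
  | zero =>
    intro α β γ δ _ _ _ l r s
    rw [rowZ_zero]; split_ifs <;> simp
  | succ n ih =>
    intro α β γ δ hα hβ hγ l r s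
    rw [rowZ_succ]
    refine Polynomial.natDegree_sum_le_of_forall_le _ _ fun m _ => ?_
    refine (Polynomial.natDegree_mul_le_of_le (m := 1) ?_ (ih _ _ _ _ (fun j => hα _)
      (fun j => hβ _) (fun j => hγ _) _ _ _)).trans (add_comm 1 n).le
    cases l <;> cases m <;> cases s 0 <;> simp [sixV, hα, hβ, hγ]

theorem cubicZ_corner (ω : R) (hω : ω ^ 2 + ω + 1 = 0) (n : ℕ) (x y : Fin (n + 1) → R)
    (h : x 0 = ω * y 0) :
    cubicZ ω (n + 1) x y = (1 - ω ^ 2) * (∏ j : Fin n, (x 0 - ω ^ 2 * y j.succ)) *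
      (∏ i : Fin n, (x i.succ - ω ^ 2 * y 0)) *
        cubicZ ω n (fun i => x i.succ) (fun j => y j.succ) := by
  refine dwZ_corner _ _ _ _ _ ?_
  rw [h]; linear_combination - (ω - 1) * y 0 * hω

theorem cubicZ_corner' (ω : R) (hω : ω ^ 2 + ω + 1 = 0) (n : ℕ) (x y : Fin (n + 1) → R)
    (h : x 0 = ω ^ 2 * y 0) :
    cubicZ ω (n + 1) x y = (1 - ω ^ 2) * (∏ j : Fin n, (y j.succ - ω ^ 2 * x 0)) *
      (∏ i : Fin n, (y 0 - ω ^ 2 * x i.succ)) *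
        cubicZ ω n (fun i => x i.succ) (fun j => y j.succ) := by
  rw [cubicZ_comm ω hω, cubicZ_corner ω hω, cubicZ_comm ω hω n]
  · ring
  · rw [h]; linear_combination - (ω - 1) * y 0 * hω

theorem cubicZ_comp_right (ω : R) (hω : ω ^ 2 + ω + 1 = 0) (n : ℕ) (x y : Fin n → R)
    (σ : Equiv.Perm (Fin n)) : cubicZ ω n x (y ∘ σ) = cubicZ ω n x y := by
  rw [cubicZ_comm ω hω, cubicZ_comp_left ω hω, cubicZ_comm ω hω]

open Polynomial in
/-- The partition function as a polynomial in one row parameter, with its extra linear factors. -/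
noncomputable def cubicPoly (ω : R) (n : ℕ) (x : Fin n → R) (y : Fin (n + 1) → R) : Polynomial R :=
  cubicZ (C ω) (n + 1) (Fin.cons X fun i => C (x i)) (fun j => C (y j)) *
    ((∏ i, (X - C (x i))) * ∏ j, (X - C (y j)))

theorem eval_cubicPoly (ω : R) (n : ℕ) (x : Fin n → R) (y : Fin (n + 1) → R) (z : R) :
    (cubicPoly ω n x y).eval z = cubicZ ω (n + 1) (Fin.cons z x) y *
      ((∏ i, (z - x i)) * ∏ j, (z - y j)) := by
  open Polynomial in
  have := map_cubicZ (evalRingHom z) (C ω) (n + 1) (Fin.cons X fun i => C (x i)) (fun j => C (y j))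
  rw [coe_evalRingHom] at this
  rw [cubicPoly, eval_mul, this]
  simp only [eval_mul, eval_prod, eval_sub, eval_X, eval_C]
  congr 2
  funext i
  cases i using Fin.cases <;> simp

theorem map_cubicPoly (f : R →+* S) (ω : R) (n : ℕ) (x : Fin n → R) (y : Fin (n + 1) → R) :
    (cubicPoly ω n x y).map f = cubicPoly (f ω) n (fun i => f (x i)) (fun j => f (y j)) := by
  open Polynomial in
  have := map_cubicZ (mapRingHom f) (C ω) (n + 1) (Fin.cons X fun i => C (x i)) (fun j => C (y j))
  rw [coe_mapRingHom] at this
  rw [cubicPoly, Polynomial.map_mul, this, cubicPoly]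
  simp only [Polynomial.map_mul, Polynomial.map_prod, Polynomial.map_sub, map_X, map_C]
  congr 2
  funext i
  cases i using Fin.cases <;> simp

theorem natDegree_cubicPoly_lt (ω : R) (n : ℕ) (x : Fin n → R) (y : Fin (n + 1) → R) :
    (cubicPoly ω n x y).natDegree < 3 * (n + 1) := by
  open Polynomial in
  have h1 : (cubicZ (C ω) (n + 1) (Fin.cons X fun i => C (x i))
      (fun j => C (y j))).natDegree ≤ n + 1 := by
    unfold cubicZ dwZ
    rw [latticeZ_succ]
    refine natDegree_sum_le_of_forall_le _ _ fun s _ => ?_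
    refine natDegree_mul_le_of_le (n := 0) (natDegree_rowZ_le _ _ _ _ _ ?_ ?_ ?_ _ _ _) ?_
    · intro j; simp only [Fin.cons_zero]; compute_degree
    · intro j; simp only [Fin.cons_zero]; compute_degree
    · intro j; rw [← C_1, ← C_pow, ← C_sub, natDegree_C]; exact zero_le_one
    · have := map_latticeZ (C : R →+* R[X]) n (n + 1) (fun i j => cubicV ω (x i) (y j))
        (fun _ => false) (fun _ => true) s (fun _ => true)
      simp only [map_cubicV] at this
      simp only [Fin.cons_succ]
      refine le_of_eq_of_le (congrArg natDegree this.symm) (by simp)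
  have h2 : (∏ i, (X - C (x i))).natDegree ≤ n := by
    refine (natDegree_prod_le _ _).trans ((sum_le_sum fun i _ => natDegree_X_sub_C_le _).trans ?_)
    simp
  have h3 : (∏ i, (X - C (y i))).natDegree ≤ n + 1 := by
    refine (natDegree_prod_le _ _).trans ((sum_le_sum fun i _ => natDegree_X_sub_C_le _).trans ?_)
    simp
  have := natDegree_mul_le_of_le h1 (natDegree_mul_le_of_le h2 h3)
  unfold cubicPoly
  omega

theorem eval_cubicPoly_mul_left (ω : R) (hω : ω ^ 2 + ω + 1 = 0) (n : ℕ) (x : Fin n → R)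
    (y : Fin (n + 1) → R) (j : Fin (n + 1)) :
    (cubicPoly ω n x y).eval (ω * y j) = - ω * (cubicPoly ω n x y).eval (ω ^ 2 * y j) := by
  have hω3 : ω ^ 3 = 1 := by linear_combination (ω - 1) * hω
  simp only [eval_cubicPoly]
  have hp : ∀ z, ∏ k, (z - y k) = ∏ k, (z - (y ∘ Equiv.swap 0 j) k) := fun z =>
    (Equiv.prod_comp (Equiv.swap 0 j) fun k => z - y k).symm
  have hj : y j = (y ∘ Equiv.swap 0 j) 0 := by simp
  rw [hp, hp, ← cubicZ_comp_right ω hω _ _ y (Equiv.swap 0 j),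
    ← cubicZ_comp_right ω hω _ (Fin.cons (ω ^ 2 * y j) x) y (Equiv.swap 0 j), hj]
  generalize y ∘ Equiv.swap 0 j = y
  rw [cubicZ_corner ω hω _ _ _ (Fin.cons_zero _ _), cubicZ_corner' ω hω _ _ _ (Fin.cons_zero _ _)]
  simp only [Fin.cons_zero, Fin.cons_succ, Fin.prod_univ_succ (n := n)]
  have e1 : ∏ k : Fin n, ((ω * y 0 - ω ^ 2 * y k.succ) * (ω * y 0 - y k.succ)) =
      ∏ k : Fin n, (-ω ^ 2 * ((y k.succ - ω ^ 2 * (ω ^ 2 * y 0)) * (ω ^ 2 * y 0 - y k.succ))) := by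
    refine prod_congr rfl fun k _ => ?_
    grind
  have e2 : ∏ k : Fin n, ((x k - ω ^ 2 * y 0) * (ω * y 0 - x k)) =
      ∏ k : Fin n, (-ω * ((y 0 - ω ^ 2 * x k) * (ω ^ 2 * y 0 - x k))) := by
    refine prod_congr rfl fun k _ => ?_
    grind
  simp only [prod_mul_distrib, prod_const, card_univ, Fintype.card_fin] at e1 e2
  have e3 : (-ω ^ 2) ^ n * (-ω) ^ n = 1 := by
    rw [← mul_pow, show -ω ^ 2 * -ω = ω ^ 3 by ring, hω3, one_pow]
  have e4 : ω * y 0 - y 0 = -ω * (ω ^ 2 * y 0 - y 0) := by linear_combination (ω - 1) * y 0 * hω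
  generalize ∏ k : Fin n, (ω * y 0 - ω ^ 2 * y k.succ) = P₁ at *
  generalize ∏ k : Fin n, (ω * y 0 - y k.succ) = P₂ at *
  generalize ∏ k : Fin n, (x k - ω ^ 2 * y 0) = P₃ at *
  generalize ∏ k : Fin n, (ω * y 0 - x k) = P₄ at *
  generalize ∏ k : Fin n, (y k.succ - ω ^ 2 * (ω ^ 2 * y 0)) = Q₁ at *
  generalize ∏ k : Fin n, (ω ^ 2 * y 0 - y k.succ) = Q₂ at *
  generalize ∏ k : Fin n, (y 0 - ω ^ 2 * x k) = Q₃ at *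
  generalize ∏ k : Fin n, (ω ^ 2 * y 0 - x k) = Q₄ at *
  generalize cubicZ ω n x (fun j => y j.succ) = Z at *
  linear_combination (1 - ω ^ 2) * Z * (ω * y 0 - y 0) * (P₃ * P₄ * e1 +
    (-ω ^ 2) ^ n * (Q₁ * Q₂) * e2 + Q₁ * Q₂ * Q₃ * Q₄ * e3) +
    (1 - ω ^ 2) * Z * Q₁ * Q₂ * Q₃ * Q₄ * e4

theorem cubicPoly_mem_of_isDomain [IsDomain R] (h3 : (3 : R) ≠ 0) (ω : R)
    (hω : ω ^ 2 + ω + 1 = 0) (n : ℕ) (x : Fin n → R) (y : Fin (n + 1) → R)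
    (hy0 : ∀ j, y j ≠ 0) (hy : Function.Injective fun j => y j ^ 3) :
    cubicPoly ω n x y ∈ sparsePoly R (n + 1) := by
  refine mem_sparsePoly_of_eval h3 ω hω _ _ (natDegree_cubicPoly_lt ω n x y) y hy0 hy fun j => ?_
  rw [eval_cubicPoly_mul_left ω hω]
  have : (cubicPoly ω n x y).eval (y j) = 0 := by
    rw [eval_cubicPoly, prod_eq_zero (mem_univ j) (sub_self (y j)), mul_zero, mul_zero]
  rw [this]; ring

theorem map_mem_sparsePoly (f : R →+* S) {m : ℕ} {P : Polynomial R} (h : P ∈ sparsePoly R m) :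
    P.map f ∈ sparsePoly S m := fun k hk => by
  rw [Polynomial.coeff_map, h k hk, map_zero]

theorem cubicPoly_mem [IsDomain R] (h3 : (3 : R) ≠ 0) (ω : R)
    (hω : ω ^ 2 + ω + 1 = 0) (n : ℕ) (x : Fin n → R) (y : Fin (n + 1) → R) :
    cubicPoly ω n x y ∈ sparsePoly R (n + 1) := by
  open MvPolynomial in
  have key := cubicPoly_mem_of_isDomain (R := MvPolynomial (Fin (n + 1)) R) (by
      intro h
      apply h3
      simpa only [map_ofNat, map_zero] using congrArg constantCoeff h)
    (C ω) (by rw [← map_pow, ← map_add, ← map_one C, ← map_add, hω, map_zero]) n (fun i => C (x i)) X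
    (fun j => X_ne_zero j) (by
      intro i j hij
      by_contra hne
      have := congrArg (eval fun k => if k = i then (1 : R) else 0) hij
      simp [Ne.symm hne] at this)
  have h := map_mem_sparsePoly (MvPolynomial.eval y) key
  rw [map_cubicPoly] at h
  simpa using h

end Sparse

section Uniqueness

variable {K : Type*} [Field K]

open Polynomial in
theorem eq_zero_of_X_sub_one_pow_dvd [CharZero K] (k : ℕ) : ∀ P : K[X], #P.support ≤ k → (X - 1) ^ k ∣ P →
    P = 0 := by
  induction k with
  | zero => intro P h _; simpa using h
  | succ k ih =>
    intro P h hd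
    by_contra hP
    obtain ⟨e, he⟩ := nonempty_support_iff.2 hP
    let Q : K[X] := X * derivative P - C (e : K) * P
    have hQc : ∀ j, Q.coeff j = (j - e) * P.coeff j := by
      intro j
      cases j with
      | zero => simp [Q]
      | succ j => simp [Q, coeff_X_mul, coeff_derivative]; ring
    have hQ : Q = 0 := by
      refine ih Q ?_ ?_
      · have : Q.support ⊆ P.support.erase e := by
          intro j hj
          rw [mem_support_iff, hQc] at hj
          rw [mem_erase, mem_support_iff]
          refine ⟨?_, right_ne_zero_of_mul hj⟩
          rintro rfl
          simp at hj
        have := card_le_card this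
        rw [card_erase_of_mem he] at this
        omega
      · exact dvd_sub (Dvd.dvd.mul_left (pow_sub_one_dvd_derivative_of_pow_dvd hd) _)
          (Dvd.dvd.mul_left ((pow_dvd_pow _ k.le_succ).trans hd) _)
    have hPe : P = monomial e (P.coeff e) := by
      ext j
      rw [coeff_monomial]
      split_ifs with hj
      · rw [hj]
      · have := hQc j
        rw [hQ, coeff_zero, eq_comm, mul_eq_zero, sub_eq_zero, Nat.cast_inj] at this
        exact this.resolve_left (Ne.symm hj)
    have h1 : P.eval 1 = 0 := by
      obtain ⟨W, rfl⟩ := (dvd_pow_self (X - 1 : K[X]) k.succ_ne_zero).trans hd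
      simp
    rw [hPe, eval_monomial, one_pow, mul_one] at h1
    exact mem_support_iff.1 he h1

theorem card_support_le_of_mem_sparsePoly {m : ℕ} {P : Polynomial K} (h : P ∈ sparsePoly K m) :
    #P.support ≤ 2 * m := by
  have hs : P.support ⊆ (range (3 * m)).filter (fun k => k % 3 ≠ 2) := by
    intro k hk
    rw [Polynomial.mem_support_iff] at hk
    rw [mem_filter, mem_range]
    by_contra hc
    exact hk (h k (by omega))
  refine (card_le_card hs).trans ?_
  rw [card_filter, sum_range_three_mul]
  refine (sum_congr rfl (g := fun _ => 2) fun k _ => ?_).trans_le (by simp [mul_comm])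
  rw [if_pos (by omega), if_pos (by omega), if_neg (by omega)]

theorem eval_add_eval_add_eval {m : ℕ} {P : Polynomial K} (h : P ∈ sparsePoly K m) (ω : K)
    (hω : ω ^ 2 + ω + 1 = 0) (y : K) :
    P.eval y + ω * P.eval (ω * y) + ω ^ 2 * P.eval (ω ^ 2 * y) = 0 := by
  have hω3 : ω ^ 3 = 1 := by linear_combination (ω - 1) * hω
  simp only [Polynomial.eval_eq_sum, Polynomial.sum, mul_sum, ← sum_add_distrib]
  refine sum_eq_zero fun e he => ?_
  have he' : e % 3 ≠ 2 := fun h' => Polynomial.mem_support_iff.1 he (h e (Or.inr h'))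
  have p1 : ∀ q, ω ^ (3 * q) = 1 := fun q => by rw [pow_mul, hω3, one_pow]
  have p2 : ∀ q, (ω ^ 2) ^ (3 * q) = 1 := fun q => by
    rw [← pow_mul, mul_comm, pow_mul, p1, one_pow]
  obtain ⟨q, rfl | rfl⟩ : ∃ q, e = 3 * q ∨ e = 3 * q + 1 := ⟨e / 3, by omega⟩
  · rw [mul_pow, mul_pow, p1, p2]
    linear_combination P.coeff (3 * q) * y ^ (3 * q) * hω
  · rw [mul_pow, mul_pow, pow_succ ω, pow_succ (ω ^ 2), p1, p2]
    linear_combination P.coeff (3 * q + 1) * y ^ (3 * q + 1) * (ω ^ 2 - ω + 1) * hω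

open Polynomial in
theorem exists_of_mem_sparsePoly [CharZero K] {m : ℕ} {P : K[X]} (h : P ∈ sparsePoly K (m + 1)) (ω : K)
    (hω : ω ^ 2 + ω + 1 = 0) (h1 : P.eval 1 = 0) (h2 : P.eval ω = 0) :
    ∃ Q ∈ sparsePoly K m, P = (X ^ 3 - 1) * Q := by
  have hω3 : ω ^ 3 = 1 := by linear_combination (ω - 1) * hω
  have hω0 : ω ≠ 0 := by rintro rfl; simp at hω
  have hω1 : ω ≠ 1 := by rintro rfl; norm_num at hω
  have h3 : P.eval (ω ^ 2) = 0 := by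
    have := eval_add_eval_add_eval h ω hω 1
    simpa [h1, h2, hω0] using this
  obtain ⟨P₁, rfl⟩ := dvd_iff_isRoot.2 h1
  have h2' : P₁.eval ω = 0 := by simpa [sub_eq_zero, hω1] using h2
  obtain ⟨P₂, rfl⟩ := dvd_iff_isRoot.2 h2'
  have h3' : P₂.eval (ω ^ 2) = 0 := by
    have a1 : ω ^ 2 - 1 ≠ 0 := by
      intro h'; apply hω1; linear_combination hω3 - ω * h'
    have a2 : ω ^ 2 - ω ≠ 0 := by
      intro h'; exact hω1 (mul_left_cancel₀ hω0 (by linear_combination h'))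
    simpa [a1, a2] using h3
  obtain ⟨Q, rfl⟩ := dvd_iff_isRoot.2 h3'
  have hP : (X - C 1) * ((X - C ω) * ((X - C (ω ^ 2)) * Q)) = (X ^ 3 - 1) * Q := by
    have hC : (C ω) ^ 2 + C ω + 1 = 0 := by
      rw [← map_pow, ← map_add, ← map_one C, ← map_add, hω, map_zero]
    rw [C_1, map_pow]
    linear_combination ((X - 1) * (- X + (C ω - 1))) * Q * hC
  refine ⟨Q, ?_, hP⟩
  rw [hP] at h
  intro k hk
  have step : ∀ j, Q.coeff (k + 3 * j) = Q.coeff (k + 3 * (j + 1)) := by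
    intro j
    have := h (k + 3 * j + 3) (by omega)
    rw [sub_mul, one_mul, coeff_sub, add_comm _ 3, coeff_X_pow_mul', if_pos (by omega),
      Nat.add_sub_cancel_left, sub_eq_zero] at this
    rw [this]; congr 1; ring
  have all : ∀ j, Q.coeff k = Q.coeff (k + 3 * j) := by
    intro j
    induction j with
    | zero => rfl
    | succ j ih => rw [ih, step]
  rw [all (Q.natDegree + 1)]
  exact coeff_eq_zero_of_natDegree_lt (by omega)

open Polynomial in
theorem X_pow_three_sub_C_mul_mem {m : ℕ} {P : K[X]} (h : P ∈ sparsePoly K m) (c : K) :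
    (X ^ 3 - C c) * P ∈ sparsePoly K (m + 1) := by
  intro k hk
  rw [sub_mul, coeff_sub, coeff_C_mul, coeff_X_pow_mul', h k (by omega), mul_zero, sub_zero]
  split_ifs
  · exact h _ (by omega)
  · rfl

open Polynomial in
theorem eq_zero_of_mem_sparsePoly [CharZero K] {m : ℕ} {S Q : K[X]} (ω c : K) (hω : ω ^ 2 + ω + 1 = 0)
    (hS : (X - 1) ^ (2 * m + 3) * S ∈ sparsePoly K (m + 2))
    (hQ : (X - 1) ^ (2 * m + 3) * Q ∈ sparsePoly K (m + 3))
    (hS1 : S.eval 1 ≠ 0) (hSc : S.eval c ≠ 0) (hc : c ^ 3 ≠ 1)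
    (hQ1 : Q.eval 1 = 0) (hQω : Q.eval ω = 0) (hQc : Q.eval c = 0) : Q = 0 := by
  obtain ⟨P', hP', hP⟩ := exists_of_mem_sparsePoly hQ ω hω (by simp) (by simp [hQω])
  obtain ⟨Q₁, rfl⟩ := dvd_iff_isRoot.2 hQ1
  have hX1 : (X - 1 : K[X]) ≠ 0 := X_sub_C_ne_zero (1 : K)
  have hd : (X - 1) ^ (2 * m + 3) ∣ P' := by
    have h1 : (X - 1) ^ (2 * m + 3) * Q₁ = (X ^ 2 + X + 1) * P' := by
      apply mul_left_cancel₀ hX1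
      rw [C_1] at hP
      linear_combination hP
    have hco : IsCoprime ((X - 1 : K[X]) ^ (2 * m + 3)) (X ^ 2 + X + 1) := by
      refine IsCoprime.pow_left ⟨- C (1 / 3) * (X + 2), C (1 / 3), ?_⟩
      have : (C (1 / 3) : K[X]) * 3 = 1 := by
        rw [show (3 : K[X]) = C 3 from rfl, ← C_mul]; norm_num
      linear_combination this
    exact hco.dvd_of_dvd_mul_left (h1 ▸ Dvd.intro _ rfl)
  obtain ⟨Q', rfl⟩ := hd
  have hR : (X - 1) ^ (2 * m + 3) * (C (S.eval 1) * Q' - C (Q'.eval 1) * S) = 0 := by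
    refine eq_zero_of_X_sub_one_pow_dvd (2 * (m + 2)) _ ?_ ?_
    · apply card_support_le_of_mem_sparsePoly
      have := sub_mem ((sparsePoly K (m + 2)).smul_mem (S.eval 1) hP')
        ((sparsePoly K (m + 2)).smul_mem (Q'.eval 1) hS)
      rw [smul_eq_C_mul, smul_eq_C_mul] at this
      convert this using 1
      ring
    · rw [show 2 * (m + 2) = 2 * m + 3 + 1 by ring, pow_succ]
      refine mul_dvd_mul_left _ ?_
      rw [← C_1, dvd_iff_isRoot]
      simp [mul_comm]
  have hR' := (mul_eq_zero.1 hR).resolve_left (pow_ne_zero _ hX1)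
  have hc1 : c - 1 ≠ 0 := by
    intro h; apply hc; rw [sub_eq_zero.1 h, one_pow]
  have hQ'c : Q'.eval c = 0 := by
    have := congrArg (eval c) hP
    rw [eval_mul, hQc, mul_zero] at this
    simpa [sub_eq_zero, hc, sub_ne_zero.1 hc1, hc1] using this.symm
  have hQ'1 : Q'.eval 1 = 0 := by
    have := congrArg (eval c) hR'
    simpa [hQ'c, hSc] using this
  have : Q' = 0 := by
    rw [hQ'1, C_0, zero_mul, sub_zero] at hR'
    simpa [hS1] using hR'
  rw [this, mul_zero, mul_zero] at hP
  exact (mul_eq_zero.1 hP).resolve_left (pow_ne_zero _ hX1)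

end Uniqueness

section CubicIdentity

variable {K : Type*} [Field K]

/-- The partition function with one row parameter `a` and all other parameters equal to `1`. -/
def singlyZ (ω : K) (m : ℕ) (a : K) : K :=
  cubicZ ω (m + 1) (Fin.cons a fun _ => 1) fun _ => 1

/-- The partition function with two row parameters `a`, `b` and all other parameters equal
to `1`. -/
def doublyZ (ω : K) (m : ℕ) (a b : K) : K :=
  cubicZ ω (m + 2) (Fin.cons a (Fin.cons b fun _ => 1)) fun _ => 1

/-- The partition function with two row parameters `a`, `b`, one column parameter `c`, and all
other parameters equal to `1`. -/
def triplyZ (ω : K) (m : ℕ) (a b c : K) : K :=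
  cubicZ ω (m + 2) (Fin.cons a (Fin.cons b fun _ => 1)) (Fin.cons c fun _ => 1)

theorem cons_cons_comp_swap {α : Type*} (m : ℕ) (a b : α) (x : Fin m → α) :
    (Fin.cons a (Fin.cons b x) : Fin (m + 2) → α) ∘ Equiv.swap 0 1 =
      Fin.cons b (Fin.cons a x) := by
  funext i
  cases i using Fin.cases with
  | zero => simp
  | succ i =>
    cases i using Fin.cases with
    | zero => simp
    | succ i =>
      simp only [Function.comp_apply]
      rw [Equiv.swap_apply_of_ne_of_ne (Fin.succ_ne_zero _) (by simp [Fin.ext_iff])]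
      simp

theorem triplyZ_comm (ω : K) (hω : ω ^ 2 + ω + 1 = 0) (m : ℕ) (a b c : K) :
    triplyZ ω m a b c = triplyZ ω m b a c := by
  rw [triplyZ, ← cubicZ_comp_left ω hω _ _ _ (Equiv.swap 0 1), cons_cons_comp_swap, triplyZ]

theorem doublyZ_comm (ω : K) (hω : ω ^ 2 + ω + 1 = 0) (m : ℕ) (a b : K) :
    doublyZ ω m a b = doublyZ ω m b a := by
  rw [doublyZ, ← cubicZ_comp_left ω hω _ _ _ (Equiv.swap 0 1), cons_cons_comp_swap, doublyZ]

theorem cons_one_one (m : ℕ) : (Fin.cons 1 fun _ => 1 : Fin (m + 1) → K) = fun _ => 1 := by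
  funext i
  cases i using Fin.cases <;> simp

theorem doublyZ_one (ω : K) (hω : ω ^ 2 + ω + 1 = 0) (m : ℕ) (a : K) :
    doublyZ ω m 1 a = singlyZ ω (m + 1) a := by
  rw [doublyZ_comm ω hω, doublyZ, cons_one_one, singlyZ]

theorem singlyZ_root (ω : K) (hω : ω ^ 2 + ω + 1 = 0) (m : ℕ) :
    singlyZ ω (m + 1) ω = (1 - ω ^ 2) ^ (m + 2) * (ω - ω ^ 2) ^ (m + 1) * singlyZ ω m 1 := by
  rw [singlyZ, cubicZ_corner ω hω _ _ _ (by simp)]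
  simp only [singlyZ, cons_one_one, Fin.cons_zero, Fin.cons_succ, mul_one, prod_const, card_univ,
    Fintype.card_fin]
  ring

theorem triplyZ_root (ω : K) (hω : ω ^ 2 + ω + 1 = 0) (m : ℕ) (c : K) :
    triplyZ ω (m + 1) ω 1 c = (1 - ω ^ 2) ^ (m + 3) * (ω - ω ^ 2) ^ (m + 1) * (ω - ω ^ 2 * c) *
      singlyZ ω (m + 1) c := by
  have : (Fin.cons c fun _ => 1 : Fin (m + 3) → K) ∘ Equiv.swap 0 1 =
      Fin.cons 1 (Fin.cons c fun _ => 1) := by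
    rw [← cons_one_one (m + 1), cons_cons_comp_swap]
  rw [triplyZ, cons_one_one, ← cubicZ_comp_right ω hω _ _ _ (Equiv.swap 0 1), this,
    cubicZ_corner ω hω _ _ _ (by simp)]
  have h1 : singlyZ ω (m + 1) c = cubicZ ω (m + 2) (fun _ => 1) (Fin.cons c fun _ => 1) := by
    rw [cubicZ_comm ω hω, singlyZ]
  simp only [Fin.cons_zero, Fin.cons_succ, h1]
  rw [Fin.prod_univ_succ]
  simp only [Fin.cons_zero, Fin.cons_succ, mul_one, prod_const, card_univ, Fintype.card_fin]
  ring

open Polynomial in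
/-- The partition function as a polynomial in one row parameter. -/
noncomputable def rowPoly (ω : K) (n : ℕ) (x : Fin n → K) (y : Fin (n + 1) → K) : K[X] :=
  cubicZ (C ω) (n + 1) (Fin.cons X fun i => C (x i)) fun j => C (y j)

open Polynomial in
theorem eval_rowPoly (ω : K) (n : ℕ) (x : Fin n → K) (y : Fin (n + 1) → K) (z : K) :
    (rowPoly ω n x y).eval z = cubicZ ω (n + 1) (Fin.cons z x) y := by
  have := map_cubicZ (evalRingHom z) (C ω) (n + 1) (Fin.cons X fun i => C (x i)) (fun j => C (y j))
  rw [coe_evalRingHom] at this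
  rw [rowPoly, this]
  simp only [eval_C]
  congr 1
  funext i
  cases i using Fin.cases <;> simp

open Polynomial in
theorem rowPoly_mem [CharZero K] (ω : K) (hω : ω ^ 2 + ω + 1 = 0) (n : ℕ) (x : Fin n → K)
    (y : Fin (n + 1) → K) :
    rowPoly ω n x y * ((∏ i, (X - C (x i))) * ∏ j, (X - C (y j))) ∈ sparsePoly K (n + 1) :=
  cubicPoly_mem three_ne_zero ω hω n x y

/-- The difference of the two sides of the identity relating `triplyZ`, `doublyZ` and `singlyZ`,
with extra linear factors. -/
def cubicDefect (ω : K) (m : ℕ) (c a b : K) : K :=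
  (a - c) * (b - c) * (ω * singlyZ ω m 1 * (1 - c) * (a - b) * triplyZ ω (m + 1) a b c +
    (b ^ 2 + b + 1) * (a ^ 2 + a * c + c ^ 2) * singlyZ ω (m + 1) a * doublyZ ω m b c -
    (a ^ 2 + a + 1) * (b ^ 2 + b * c + c ^ 2) * singlyZ ω (m + 1) b * doublyZ ω m a c)

theorem cubicDefect_swap (ω : K) (hω : ω ^ 2 + ω + 1 = 0) (m : ℕ) (c a b : K) :
    cubicDefect ω m c a b = - cubicDefect ω m c b a := by
  unfold cubicDefect
  rw [triplyZ_comm ω hω (m + 1) a b]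
  ring

theorem cubicDefect_root (ω : K) (hω : ω ^ 2 + ω + 1 = 0) (m : ℕ) (c : K) :
    cubicDefect ω m c ω 1 = 0 := by
  unfold cubicDefect
  rw [triplyZ_root ω hω, singlyZ_root ω hω, doublyZ_one ω hω]
  have h2 : ω ^ 2 = -ω - 1 := by linear_combination hω
  have key : ω * (1 - c) * (ω - 1) * (1 - ω ^ 2) * (ω - ω ^ 2 * c) +
      3 * (ω ^ 2 + ω * c + c ^ 2) = 0 := by grind
  rw [hω]
  linear_combination (ω - c) * (1 - c) * (1 - ω ^ 2) ^ (m + 2) * (ω - ω ^ 2) ^ (m + 1) *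
    singlyZ ω m 1 * singlyZ ω (m + 1) c * key

open Polynomial in
theorem cubicDefect_eq_zero_of_roots [CharZero K] (ω : K) (hω : ω ^ 2 + ω + 1 = 0) (m : ℕ) (c : K)
    (hc : c ^ 3 ≠ 1) (hS1 : singlyZ ω (m + 1) 1 ≠ 0) (hSc : singlyZ ω (m + 1) c ≠ 0) (b : K)
    (h1 : cubicDefect ω m c 1 b = 0) (hω' : cubicDefect ω m c ω b = 0) (a : K) :
    cubicDefect ω m c a b = 0 := by
  let S : K[X] := rowPoly ω (m + 1) (fun _ => 1) fun _ => 1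
  let O : K[X] := rowPoly ω (m + 1) (Fin.cons c fun _ => 1) fun _ => 1
  let F : K[X] := rowPoly ω (m + 2) (Fin.cons b fun _ => 1) (Fin.cons c fun _ => 1)
  have eS : ∀ z, S.eval z = singlyZ ω (m + 1) z := fun z => eval_rowPoly ..
  have eO : ∀ z, O.eval z = doublyZ ω m z c := fun z => eval_rowPoly ..
  have eF : ∀ z, F.eval z = triplyZ ω (m + 1) z b c := fun z => eval_rowPoly ..
  have mS := rowPoly_mem ω hω (m + 1) (fun _ => 1) fun _ => 1
  have mO := rowPoly_mem ω hω (m + 1) (Fin.cons c fun _ => 1) fun _ => 1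
  have mF := rowPoly_mem ω hω (m + 2) (Fin.cons b fun _ => 1) (Fin.cons c fun _ => 1)
  simp only [Fin.prod_univ_succ (n := m), Fin.prod_univ_succ (n := m + 1),
    Fin.prod_univ_succ (n := m + 2), Fin.cons_zero, Fin.cons_succ, prod_const, card_univ,
    Fintype.card_fin, C_1] at mS mO mF
  let u := ω * singlyZ ω m 1 * (1 - c) * (b - c)
  let v := (b ^ 2 + b + 1) * (b - c) * doublyZ ω m b c
  let w := (b ^ 2 + b * c + c ^ 2) * (b - c) * singlyZ ω (m + 1) b
  let Q : K[X] := C u * ((X - C b) * (X - C c) * F) + C v * ((X ^ 3 - C (c ^ 3)) * S) -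
    C w * ((X ^ 2 + X + 1) * (X - C c) * O)
  have eQ : ∀ z, Q.eval z = cubicDefect ω m c z b := by
    intro z
    simp only [Q, eval_add, eval_sub, eval_mul, eval_C, eval_X, eval_pow, eval_one, eS, eO, eF,
      cubicDefect, u, v, w]
    ring
  have hQ : Q = 0 := by
    refine eq_zero_of_mem_sparsePoly (m := m) (S := S) ω c hω ?_ ?_ (by rwa [eS]) (by rwa [eS]) hc
      (by rwa [eQ]) (by rwa [eQ]) (by rw [eQ, cubicDefect, sub_self, zero_mul, zero_mul])
    · convert mS using 1
      ring
    · have := sub_mem (add_mem ((sparsePoly K (m + 3)).smul_mem u mF)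
        ((sparsePoly K (m + 3)).smul_mem v (X_pow_three_sub_C_mul_mem mS (c ^ 3))))
        ((sparsePoly K (m + 3)).smul_mem w (X_pow_three_sub_C_mul_mem mO 1))
      simp only [smul_eq_C_mul] at this
      convert this using 1
      simp only [Q, C_1]
      ring
  rw [← eQ, hQ, eval_zero]

theorem triplyZ_identity [CharZero K] (ω : K) (hω : ω ^ 2 + ω + 1 = 0) (m : ℕ) (a b c : K)
    (hc : c ^ 3 ≠ 1) (hS1 : singlyZ ω (m + 1) 1 ≠ 0) (hSc : singlyZ ω (m + 1) c ≠ 0)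
    (ha : a ≠ c) (hb : b ≠ c) :
    ω * singlyZ ω m 1 * (1 - c) * (a - b) * triplyZ ω (m + 1) a b c =
    (a ^ 2 + a + 1) * (b ^ 2 + b * c + c ^ 2) * singlyZ ω (m + 1) b * doublyZ ω m a c -
    (b ^ 2 + b + 1) * (a ^ 2 + a * c + c ^ 2) * singlyZ ω (m + 1) a * doublyZ ω m b c := by
  have step := cubicDefect_eq_zero_of_roots ω hω m c hc hS1 hSc
  have hswap := cubicDefect_swap ω hω m c
  have diag : ∀ a, cubicDefect ω m c a a = 0 := fun a => by unfold cubicDefect; ring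
  have z1 := step 1 (diag 1) (cubicDefect_root ω hω m c)
  have z2 := step ω (by rw [hswap, cubicDefect_root ω hω, neg_zero]) (diag ω)
  have h := step b (by rw [hswap, z1, neg_zero]) (by rw [hswap, z2, neg_zero]) a
  unfold cubicDefect at h
  have := (mul_eq_zero.1 h).resolve_left (mul_ne_zero (sub_ne_zero.2 ha) (sub_ne_zero.2 hb))
  linear_combination this

end CubicIdentity

section RefinedModel

variable {K : Type*} [Field K]

/-- The domain wall partition function of size `m + 1` with weights `1`, except that vertices of
the first type carry the weights `z₁`, `z₂`, `z₃` in the top row, bottom row and left column, and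
that the vertices of the first type at the top left and of the second type at the bottom left
carry the weights `s` and `t`. -/
def refZ {R : Type*} [CommRing R] (m : ℕ) (z₁ z₂ z₃ s t : R) : R :=
  dwZ (m + 1)
    (fun i j => if i = 0 ∧ j = 0 then s else
      (if i = 0 then z₁ else 1) * (if i = Fin.last m then z₂ else 1) * (if j = 0 then z₃ else 1))
    (fun i j => if i = Fin.last m ∧ j = 0 then t else 1) (fun _ _ => 1) (fun _ _ => 1)

theorem refZ_rotate (m : ℕ) (z : K) : refZ (m + 1) 1 z 1 1 1 = refZ (m + 1) z 1 1 z 1 := by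
  rw [refZ, dwZ_rotate, refZ]
  have h0 : ∀ i : Fin (m + 2), i.rev = Fin.last (m + 1) ↔ i = 0 := fun i => by
    rw [Fin.rev_eq_iff, Fin.rev_last]
  have h2 : (0 : Fin (m + 2)) ≠ Fin.last (m + 1) := (Fin.last_pos).ne
  have h1 : ∀ i : Fin (m + 2), i.rev = 0 ↔ i = Fin.last (m + 1) := fun i => by
    rw [Fin.rev_eq_iff, Fin.rev_zero]
  congr 1
  · funext i j
    simp only [h0, h1]
    split_ifs <;> simp_all
  · funext i j
    simp

theorem refZ_expand (m : ℕ) (z₁ z₂ z₃ s t : K) :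
    refZ (m + 2) z₁ z₂ z₃ s t = s * t * refZ (m + 2) z₁ z₂ z₃ 1 1 +
      s * (1 - t) * (z₂ ^ (m + 2) * z₃ ^ (m + 1) * refZ (m + 1) z₁ 1 1 z₁ 1) +
      (1 - s) * t * refZ (m + 1) z₂ 1 1 z₂ 1 := by
  have h1 : refZ (m + 2) z₁ z₂ z₃ s t = s * refZ (m + 2) z₁ z₂ z₃ 1 t +
      (1 - s) * refZ (m + 2) z₁ z₂ z₃ 0 t := by
    unfold refZ
    let w (u : K) (i j : Fin (m + 3)) : K := if i = 0 ∧ j = 0 then u else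
      (if i = 0 then z₁ else 1) * (if i = Fin.last (m + 2) then z₂ else 1) * (if j = 0 then z₃ else 1)
    rw [dwZ_affine (m + 2) (w s) (w 1) (w 0)]
    · simp only [w, and_self, if_true]
    · intro i j h
      have : ¬ (i = 0 ∧ j = 0) := by tauto
      simp only [w, this, if_false, and_self]
    · simp [w]
    · simp [w]
  have h2 : refZ (m + 2) z₁ z₂ z₃ 1 t = t * refZ (m + 2) z₁ z₂ z₃ 1 1 +
      (1 - t) * refZ (m + 2) z₁ z₂ z₃ 1 0 := by
    unfold refZ
    rw [dwZ_affine' (m + 2) _ (fun i j => if i = Fin.last (m + 2) ∧ j = 0 then t else 1)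
      (fun i j => if i = Fin.last (m + 2) ∧ j = 0 then 1 else 1)
      (fun i j => if i = Fin.last (m + 2) ∧ j = 0 then 0 else 1)]
    · simp only [and_self, if_true]
    · intro i j h
      have : ¬ (i = Fin.last (m + 2) ∧ j = 0) := by tauto
      simp only [this, if_false, and_self]
    · simp
    · simp
  have h3 : refZ (m + 2) z₁ z₂ z₃ 0 t = t * refZ (m + 1) z₂ 1 1 z₂ 1 := by
    rw [← refZ_rotate, refZ, dwZ_corner _ _ _ _ _ (by simp), refZ,
      Fin.prod_univ_castSucc (n := m + 1) (f := fun i => ite (i.succ = _ ∧ _) _ _)]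
    simp only [Fin.succ_ne_zero, and_false, if_false, mul_one, one_mul, ← Fin.succ_last,
      Fin.succ_inj, prod_const_one, and_true, if_true, ite_self]
    simp only [Fin.succ_last]
    rw [prod_eq_one (s := univ) fun i _ => if_neg (Fin.castSucc_ne_last i), one_mul]
    congr 2
    funext i j
    have h2 : (0 : Fin (m + 2)) ≠ Fin.last (m + 1) := (Fin.last_pos).ne
    split_ifs <;> simp_all
  have h4 : refZ (m + 2) z₁ z₂ z₃ 1 0 = z₂ ^ (m + 2) * z₃ ^ (m + 1) * refZ (m + 1) z₁ 1 1 z₁ 1 := by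
    rw [refZ, dwZ_corner' _ _ _ _ _ (by simp), refZ,
      Fin.prod_univ_succ (n := m + 1) (f := fun i => ite (i.castSucc = _ ∧ _) _ _)]
    have h0 : Fin.last (m + 2) ≠ 0 := (Fin.last_pos).ne'
    simp only [Fin.castSucc_ne_last, Fin.succ_ne_zero, and_false, if_false, h0,
      prod_const, card_univ, Fintype.card_fin, one_mul, mul_one, if_true, Fin.castSucc_zero,
      and_true, Fin.castSucc_eq_zero_iff, ite_self]
    congr 2
    funext i j
    split_ifs <;> simp_all
  rw [h1, h2, h3, h4]
  ring

theorem cons_cons_one (m : ℕ) (a b : K) :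
    (Fin.cons a (Fin.cons b fun _ => 1) : Fin (m + 2) → K) =
      (fun i => if i = 0 then a else if i = Fin.last (m + 1) then b else 1) ∘
        Equiv.swap 1 (Fin.last (m + 1)) := by
  have hl : Fin.last (m + 1) ≠ 0 := (Fin.last_pos).ne'
  funext i
  cases i using Fin.cases with
  | zero =>
    rw [Function.comp_apply, Equiv.swap_apply_of_ne_of_ne (by simp) hl.symm]
    simp
  | succ i =>
    cases i using Fin.cases with
    | zero =>
      change b = _
      rw [Function.comp_apply, Fin.succ_zero_eq_one, Equiv.swap_apply_left, if_neg hl, if_pos rfl]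
    | succ i =>
      have h1 : i.succ.succ ≠ 1 := by
        rw [← Fin.succ_zero_eq_one, Ne, Fin.succ_inj]; exact Fin.succ_ne_zero i
      change 1 = _
      by_cases h : i.succ.succ = Fin.last (m + 1)
      · rw [Function.comp_apply, h, Equiv.swap_apply_right, if_neg (by simp), if_neg (h ▸ h1.symm)]
      · rw [Function.comp_apply, Equiv.swap_apply_of_ne_of_ne h1 h, if_neg (Fin.succ_ne_zero _),
          if_neg h]

theorem triplyZ_eq_refZ (ω : K) (hω : ω ^ 2 + ω + 1 = 0) (m : ℕ)
    (a b c A B C z₁ z₂ z₃ s t : K) (hA : A ≠ 0) (hB : B ≠ 0) (hC : C ≠ 0)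
    (ha : a - ω ^ 2 = (1 - ω ^ 2) * A) (ha' : 1 - ω ^ 2 * a = (1 - ω ^ 2) * A * z₁)
    (hb : b - ω ^ 2 = (1 - ω ^ 2) * B) (hb' : 1 - ω ^ 2 * b = (1 - ω ^ 2) * B * z₂)
    (hc : 1 - ω ^ 2 * c = (1 - ω ^ 2) * C) (hc' : c - ω ^ 2 = (1 - ω ^ 2) * C * z₃)
    (hs : c - ω ^ 2 * a = (1 - ω ^ 2) * A * C * s)
    (ht : b - ω ^ 2 * c = (1 - ω ^ 2) * B * C * t) :
    triplyZ ω m a b c = (1 - ω ^ 2) ^ ((m + 2) ^ 2) * (A * B * C) ^ (m + 1) *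
      refZ (m + 1) z₁ z₂ z₃ s t := by
  have hy : (Fin.cons c fun _ => 1 : Fin (m + 2) → K) = fun j => if j = 0 then c else 1 := by
    funext j; cases j using Fin.cases <;> simp
  rw [triplyZ, cons_cons_one, cubicZ_comp_left ω hω, hy, cubicZ, refZ]
  have hl : (0 : Fin (m + 2)) ≠ Fin.last (m + 1) := (Fin.last_pos).ne
  have hl' : Fin.last (m + 1) ≠ 0 := hl.symm
  have v0 : ∀ i : Fin (m + 2), (i : ℕ) ≠ 0 ↔ i ≠ 0 := fun i => by
    rw [Ne, Ne, Fin.val_eq_zero_iff]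
  have v1 : ∀ i : Fin (m + 2), (i : ℕ) + 1 ≠ m + 1 + 1 ↔ i ≠ Fin.last (m + 1) := fun i => by
    rw [Ne, Ne, Fin.ext_iff, Fin.val_last, Nat.add_right_cancel_iff]
  rw [dwZ_gauge (m + 2) _ _ _ _ _ _ _ _
    (fun i j => (1 - ω ^ 2) * ((if i = 0 then A else 1) * (if i = Fin.last (m + 1) then B else 1)) *
      (if j = 0 then C else 1))
    (fun i => (if i = 0 then A⁻¹ else 1) * (if i = Fin.last (m + 1) then B⁻¹ else 1))
    (fun j => if j = 0 then C⁻¹ else 1)]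
  · simp only [prod_mul_distrib, prod_const, card_univ, Fintype.card_fin, prod_ite_eq', mem_univ,
      if_true, prod_pow, ← pow_mul, ← sq]
    field_simp
    ring
  · intro i; split_ifs <;> simp [hA, hB]
  · intro i; split_ifs <;> simp [hC]
  · intro i j h
    rw [v0, v1] at h
    by_cases h0 : i = 0 <;> by_cases h1 : i = Fin.last (m + 1) <;> by_cases hj : j = 0 <;>
      simp [h0, h1, hj, hl, hl', hs, hc', ha', hb'] at h ⊢
  · intro i j h
    rw [v0, v0] at h
    by_cases h0 : i = 0 <;> by_cases h1 : i = Fin.last (m + 1) <;> by_cases hj : j = 0 <;>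
      simp [h0, h1, hj, hl, hl', ht, hc, ha, hb] at h ⊢
  · intro i j
    split_ifs <;> simp_all
    all_goals field_simp
  · intro i j h0 h1 hj
    rw [v0] at h0 hj
    rw [v1] at h1
    simp [h0, h1, hj]

theorem doublyZ_eq_refZ (ω : K) (hω : ω ^ 2 + ω + 1 = 0) (m : ℕ)
    (a b A B z₁ z₂ : K) (hA : A ≠ 0) (hB : B ≠ 0)
    (ha : a - ω ^ 2 = (1 - ω ^ 2) * A) (ha' : 1 - ω ^ 2 * a = (1 - ω ^ 2) * A * z₁)
    (hb : b - ω ^ 2 = (1 - ω ^ 2) * B) (hb' : 1 - ω ^ 2 * b = (1 - ω ^ 2) * B * z₂) :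
    doublyZ ω m a b = (1 - ω ^ 2) ^ ((m + 2) ^ 2) * (A * B) ^ (m + 1) *
      refZ (m + 1) z₁ z₂ 1 z₁ 1 := by
  have := triplyZ_eq_refZ ω hω m a b 1 A B 1 z₁ z₂ 1 z₁ 1 hA hB one_ne_zero ha ha' hb hb'
    (by ring) (by ring) (by rw [ha']; ring) (by rw [mul_one, hb]; ring)
  rwa [triplyZ, cons_one_one, mul_one] at this

theorem singlyZ_eq_refZ (ω : K) (hω : ω ^ 2 + ω + 1 = 0) (m : ℕ)
    (a A z : K) (hA : A ≠ 0)
    (ha : a - ω ^ 2 = (1 - ω ^ 2) * A) (ha' : 1 - ω ^ 2 * a = (1 - ω ^ 2) * A * z) :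
    singlyZ ω (m + 1) a = (1 - ω ^ 2) ^ ((m + 2) ^ 2) * A ^ (m + 1) *
      refZ (m + 1) z 1 1 z 1 := by
  rw [← doublyZ_one ω hω, doublyZ_comm ω hω,
    doublyZ_eq_refZ ω hω m a 1 A 1 z 1 hA one_ne_zero ha ha' (by ring) (by ring), mul_one]

theorem singlyZ_one_eq_refZ (ω : K) (m : ℕ) :
    singlyZ ω m 1 = (1 - ω ^ 2) ^ ((m + 1) ^ 2) * refZ m 1 1 1 1 1 := by
  rw [singlyZ, cons_one_one, cubicZ, refZ,
    dwZ_gauge (m + 1) (fun _ _ => 1) (fun _ _ => 1) (fun _ _ => 1) (fun _ _ => 1) _ _ _ _ (fun _ _ => 1 - ω ^ 2) (fun _ => 1) (fun _ => 1)]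
  · simp [sq, pow_mul]
  all_goals simp

end RefinedModel

section RefinedIdentity

variable {K : Type*} [Field K]

theorem cyclotomic_three_sq_add (ω A : K) (hω : ω ^ 2 + ω + 1 = 0) :
    (ω ^ 2 + (1 - ω ^ 2) * A) ^ 2 + (ω ^ 2 + (1 - ω ^ 2) * A) + 1 =
      3 * A * (-ω - ω ^ 2 * A) := by
  grind

theorem cyclotomic_three_mul_sub (ω A C : K) (hω : ω ^ 2 + ω + 1 = 0) :
    (-ω - ω ^ 2 * A) * (-ω - ω ^ 2 * C) - C * (-ω - ω ^ 2 * A) + A * C =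
      ω ^ 2 + A - ω ^ 2 * C := by
  grind

theorem cyclotomic_three_sq_add_mul (ω A C : K) (hω : ω ^ 2 + ω + 1 = 0) :
    (ω ^ 2 + (1 - ω ^ 2) * A) ^ 2 + (ω ^ 2 + (1 - ω ^ 2) * A) * (ω ^ 2 + (1 - ω ^ 2) * C) +
      (ω ^ 2 + (1 - ω ^ 2) * C) ^ 2 =
    3 * (ω ^ 2 + A - ω ^ 2 * C) * (ω ^ 2 + C - ω ^ 2 * A) := by
  grind

theorem cyclotomic_three_sub_mul (ω A C : K) :
    (ω ^ 2 + (1 - ω ^ 2) * C) - ω ^ 2 * (ω ^ 2 + (1 - ω ^ 2) * A) =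
      (1 - ω ^ 2) * (ω ^ 2 + C - ω ^ 2 * A) := by
  ring

theorem cyclotomic_three_one_sub (ω C : K) (hω : ω ^ 2 + ω + 1 = 0) :
    1 - (ω ^ 2 + (1 - ω ^ 2) * C) = -(1 - ω ^ 2) * ω ^ 2 * ((-ω - ω ^ 2 * C) - C) := by
  grind

theorem cyclotomic_three_sub (ω A C : K) (hω : ω ^ 2 + ω + 1 = 0) :
    (ω ^ 2 + (1 - ω ^ 2) * A) - (ω ^ 2 + (1 - ω ^ 2) * C) =
      (1 - ω ^ 2) * ω ^ 2 * (C * (-ω - ω ^ 2 * A) - A * (-ω - ω ^ 2 * C)) := by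
  grind

theorem cyclotomic_three_neg_nine (ω : K) (hω : ω ^ 2 + ω + 1 = 0) :
    ω * (1 - ω ^ 2) ^ 2 * (-(1 - ω ^ 2) * ω ^ 2) * ((1 - ω ^ 2) * ω ^ 2) = -9 := by
  grind

theorem cyclotomic_three_cube_sub_one (ω c : K) (hω : ω ^ 2 + ω + 1 = 0) :
    c ^ 3 - 1 = ω * (1 - c) * (c - ω ^ 2) * (1 - ω ^ 2 * c) := by
  grind

theorem refZ_specialized_identity [CharZero K] (ω : K) (hω : ω ^ 2 + ω + 1 = 0) (m : ℕ)
    (z₁ z₂ z₃ : K) (h₁ : z₁ + ω ^ 2 ≠ 0) (h₂ : z₂ + ω ^ 2 ≠ 0) (h₃ : z₃ + ω ^ 2 ≠ 0) (hz : z₃ ≠ 0)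
    (hz' : z₃ ≠ 1) (h₁₃ : z₁ ≠ z₃) (h₂₃ : z₂ ≠ z₃)
    (hS : refZ (m + 1) (1 : K) 1 1 1 1 ≠ 0) (hS₃ : refZ (m + 1) z₃ 1 1 z₃ 1 ≠ 0) :
    refZ m (1 : K) 1 1 1 1 * (z₁ - z₂) * (z₃ - 1) * (z₃ ^ (m + 2) *
      refZ (m + 2) z₁ z₂ (1 / z₃) ((z₁ * z₃ - z₃ + 1) / z₃) ((z₂ * z₃ - z₂ + 1) / z₃)) =
    (z₁ * z₃ - z₁ + 1) * (z₁ * z₃ - z₃ + 1) * z₂ * refZ (m + 1) z₁ 1 1 z₁ 1 *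
        refZ (m + 1) z₂ z₃ 1 z₂ 1 -
      (z₂ * z₃ - z₂ + 1) * (z₂ * z₃ - z₃ + 1) * z₁ * refZ (m + 1) z₂ 1 1 z₂ 1 *
        refZ (m + 1) z₁ z₃ 1 z₁ 1 := by
  have hω3 : ω ^ 3 = 1 := by linear_combination (ω - 1) * hω
  have hω0 : ω ≠ 0 := by rintro rfl; norm_num at hω
  have hω1 : ω ≠ 1 := by rintro rfl; norm_num at hω
  have h3 : (3 : K) ≠ 0 := by norm_num
  have hκ : 1 - ω ^ 2 ≠ 0 := by
    intro h
    apply hω1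
    linear_combination hω3 + ω * h
  obtain ⟨A, hA⟩ : ∃ A, A = -ω / (z₁ + ω ^ 2) := ⟨_, rfl⟩
  obtain ⟨B, hB⟩ : ∃ B, B = -ω / (z₂ + ω ^ 2) := ⟨_, rfl⟩
  obtain ⟨C, hC⟩ : ∃ C, C = -ω / (z₃ + ω ^ 2) := ⟨_, rfl⟩
  have hA0 : A ≠ 0 := hA ▸ div_ne_zero (neg_ne_zero.2 hω0) h₁
  have hB0 : B ≠ 0 := hB ▸ div_ne_zero (neg_ne_zero.2 hω0) h₂
  have hC0 : C ≠ 0 := hC ▸ div_ne_zero (neg_ne_zero.2 hω0) h₃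
  have hAz : A * z₁ = -ω - ω ^ 2 * A := by
    rw [hA]; field_simp; ring
  have hBz : B * z₂ = -ω - ω ^ 2 * B := by
    rw [hB]; field_simp; ring
  have hCz : C * z₃ = -ω - ω ^ 2 * C := by
    rw [hC]; field_simp; ring
  obtain ⟨a, ha⟩ : ∃ a, a = ω ^ 2 + (1 - ω ^ 2) * A := ⟨_, rfl⟩
  obtain ⟨b, hb⟩ : ∃ b, b = ω ^ 2 + (1 - ω ^ 2) * B := ⟨_, rfl⟩
  obtain ⟨c, hc⟩ : ∃ c, c = ω ^ 2 + (1 - ω ^ 2) * C := ⟨_, rfl⟩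
  have ha1 : a - ω ^ 2 = (1 - ω ^ 2) * A := by rw [ha]; ring
  have hb1 : b - ω ^ 2 = (1 - ω ^ 2) * B := by rw [hb]; ring
  have hc1 : c - ω ^ 2 = (1 - ω ^ 2) * C := by rw [hc]; ring
  have ha2 : 1 - ω ^ 2 * a = (1 - ω ^ 2) * A * z₁ := by
    rw [ha]
    linear_combination (-(1 - ω ^ 2)) * hAz + (1 - ω ^ 2) * hω
  have hb2 : 1 - ω ^ 2 * b = (1 - ω ^ 2) * B * z₂ := by
    rw [hb]
    linear_combination (-(1 - ω ^ 2)) * hBz + (1 - ω ^ 2) * hω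
  have hc2 : 1 - ω ^ 2 * c = (1 - ω ^ 2) * C * z₃ := by
    rw [hc]
    linear_combination (-(1 - ω ^ 2)) * hCz + (1 - ω ^ 2) * hω
  have hac : a ≠ c := by
    intro h
    have hAC : A = C := mul_left_cancel₀ hκ (by rw [← ha1, ← hc1, h])
    apply h₁₃
    apply mul_left_cancel₀ hA0
    rw [hAz, hAC, hCz]
  have hbc : b ≠ c := by
    intro h
    have hBC : B = C := mul_left_cancel₀ hκ (by rw [← hb1, ← hc1, h])
    apply h₂₃
    apply mul_left_cancel₀ hB0
    rw [hBz, hBC, hCz]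
  have e₃ : 1 - c = -(1 - ω ^ 2) * ω ^ 2 * (C * (z₃ - 1)) := by
    rw [hc, cyclotomic_three_one_sub ω C hω, ← hCz]
    ring
  have hc3 : c ^ 3 ≠ 1 := by
    rw [← sub_ne_zero, cyclotomic_three_cube_sub_one ω c hω, e₃, hc1, hc2]
    exact mul_ne_zero (mul_ne_zero (mul_ne_zero hω0 (mul_ne_zero (mul_ne_zero (neg_ne_zero.2 hκ)
      (pow_ne_zero _ hω0)) (mul_ne_zero hC0 (sub_ne_zero.2 hz')))) (mul_ne_zero hκ hC0))
      (mul_ne_zero (mul_ne_zero hκ hC0) hz)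
  have hs : c - ω ^ 2 * a = (1 - ω ^ 2) * A * (C * z₃) * ((z₁ * z₃ - z₃ + 1) / z₃) := by
    have h0 : (1 - ω ^ 2) * A * (C * z₃) * ((z₁ * z₃ - z₃ + 1) / z₃) =
        (1 - ω ^ 2) * (A * z₁ * (C * z₃) - A * (C * z₃) + A * C) := by
      field_simp
    rw [h0, hc, ha, cyclotomic_three_sub_mul ω A C, ← cyclotomic_three_mul_sub ω C A hω, hAz,
      hCz]
    ring
  have ht : b - ω ^ 2 * c = (1 - ω ^ 2) * B * (C * z₃) * ((z₂ * z₃ - z₂ + 1) / z₃) := by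
    have h0 : (1 - ω ^ 2) * B * (C * z₃) * ((z₂ * z₃ - z₂ + 1) / z₃) =
        (1 - ω ^ 2) * (B * z₂ * (C * z₃) - C * (B * z₂) + B * C) := by
      field_simp
    rw [h0, hc, hb, cyclotomic_three_sub_mul ω C B, ← cyclotomic_three_mul_sub ω B C hω, hBz,
      hCz]
  have hF := triplyZ_eq_refZ ω hω (m + 1) a b c A B (C * z₃) z₁ z₂ (1 / z₃)
    ((z₁ * z₃ - z₃ + 1) / z₃) ((z₂ * z₃ - z₂ + 1) / z₃) hA0 hB0 (mul_ne_zero hC0 hz) ha1 ha2 hb1 hb2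
    (by rw [hc2]; ring) (by rw [hc1]; field_simp) hs ht
  have hO₁ := doublyZ_eq_refZ ω hω m a c A C z₁ z₃ hA0 hC0 ha1 ha2 hc1 hc2
  have hO₂ := doublyZ_eq_refZ ω hω m b c B C z₂ z₃ hB0 hC0 hb1 hb2 hc1 hc2
  have hS₁ := singlyZ_eq_refZ ω hω m a A z₁ hA0 ha1 ha2
  have hS₂ := singlyZ_eq_refZ ω hω m b B z₂ hB0 hb1 hb2
  have hSc := singlyZ_eq_refZ ω hω m c C z₃ hC0 hc1 hc2
  have hT := singlyZ_one_eq_refZ ω m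
  have hS1 := singlyZ_one_eq_refZ ω (m + 1)
  have key := triplyZ_identity ω hω m a b c hc3
    (by rw [hS1]; exact mul_ne_zero (pow_ne_zero _ hκ) hS)
    (by rw [hSc]; exact mul_ne_zero (mul_ne_zero (pow_ne_zero _ hκ) (pow_ne_zero _ hC0)) hS₃)
    hac hbc
  rw [hF, hO₁, hO₂, hS₁, hS₂, hT] at key
  generalize refZ (m + 2) z₁ z₂ (1 / z₃) _ _ = F at key ⊢
  generalize refZ (m + 1) z₁ 1 1 z₁ 1 = Z₁ at key ⊢
  generalize refZ (m + 1) z₂ 1 1 z₂ 1 = Z₂ at key ⊢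
  generalize refZ (m + 1) z₁ z₃ 1 z₁ 1 = O₁ at key ⊢
  generalize refZ (m + 1) z₂ z₃ 1 z₂ 1 = O₂ at key ⊢
  generalize refZ m (1 : K) 1 1 1 1 = T at key ⊢
  have key' : ω * (1 - ω ^ 2) ^ 2 * T * (1 - c) * (a - b) * (A * B * C) * (z₃ ^ (m + 2) * F) =
      (a ^ 2 + a + 1) * (b ^ 2 + b * c + c ^ 2) * Z₂ * O₁ -
        (b ^ 2 + b + 1) * (a ^ 2 + a * c + c ^ 2) * Z₁ * O₂ := by
    have h0 : (1 - ω ^ 2) ^ ((m + 2) ^ 2) * (1 - ω ^ 2) ^ ((m + 2) ^ 2) * (A * B * C) ^ (m + 1) ≠ 0 :=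
      mul_ne_zero (mul_ne_zero (pow_ne_zero _ hκ) (pow_ne_zero _ hκ))
        (pow_ne_zero _ (mul_ne_zero (mul_ne_zero hA0 hB0) hC0))
    apply mul_left_cancel₀ h0
    linear_combination key
  have e : ∀ z y D E : K, D * z = -ω - ω ^ 2 * D → E * y = -ω - ω ^ 2 * E →
      3 * D ^ 2 * E ^ 2 * ((z * y - z + 1) * (z * y - y + 1)) =
        3 * (ω ^ 2 + D - ω ^ 2 * E) * (ω ^ 2 + E - ω ^ 2 * D) := by
    intro z y D E hD hE
    rw [← cyclotomic_three_mul_sub ω D E hω, ← cyclotomic_three_mul_sub ω E D hω, ← hD, ← hE]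
    ring
  have e₁ : a ^ 2 + a + 1 = 3 * z₁ * A ^ 2 := by
    rw [ha, cyclotomic_three_sq_add ω A hω, ← hAz]
    ring
  have e₂ : b ^ 2 + b + 1 = 3 * z₂ * B ^ 2 := by
    rw [hb, cyclotomic_three_sq_add ω B hω, ← hBz]
    ring
  have e₁' : a ^ 2 + a * c + c ^ 2 =
      3 * A ^ 2 * C ^ 2 * ((z₁ * z₃ - z₁ + 1) * (z₁ * z₃ - z₃ + 1)) := by
    rw [ha, hc, cyclotomic_three_sq_add_mul ω A C hω, e _ _ _ _ hAz hCz]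
  have e₂' : b ^ 2 + b * c + c ^ 2 =
      3 * B ^ 2 * C ^ 2 * ((z₂ * z₃ - z₂ + 1) * (z₂ * z₃ - z₃ + 1)) := by
    rw [hb, hc, cyclotomic_three_sq_add_mul ω B C hω, e _ _ _ _ hBz hCz]
  have e₄ : a - b = (1 - ω ^ 2) * ω ^ 2 * (A * B * (z₁ - z₂)) := by
    rw [ha, hb, cyclotomic_three_sub ω A B hω, ← hAz, ← hBz]
    ring
  rw [e₁, e₂, e₁', e₂', e₃, e₄] at key'
  have h0 : -9 * (A * B * C) ^ 2 ≠ 0 :=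
    mul_ne_zero (by norm_num) (pow_ne_zero _ (mul_ne_zero (mul_ne_zero hA0 hB0) hC0))
  apply mul_left_cancel₀ h0
  linear_combination key' - T * (C * (z₃ - 1)) * (A * B * (z₁ - z₂)) * (A * B * C) *
    (z₃ ^ (m + 2) * F) * cyclotomic_three_neg_nine ω hω

theorem refZ_identity [CharZero K] (ω : K) (hω : ω ^ 2 + ω + 1 = 0) (m : ℕ)
    (z₁ z₂ z₃ : K) (h₁ : z₁ + ω ^ 2 ≠ 0) (h₂ : z₂ + ω ^ 2 ≠ 0) (h₃ : z₃ + ω ^ 2 ≠ 0) (hz : z₃ ≠ 0)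
    (hz' : z₃ ≠ 1) (h₁₂ : z₁ ≠ z₂) (h₁₃ : z₁ ≠ z₃) (h₂₃ : z₂ ≠ z₃)
    (hT : refZ m (1 : K) 1 1 1 1 ≠ 0) (hS : refZ (m + 1) (1 : K) 1 1 1 1 ≠ 0)
    (hS₃ : refZ (m + 1) z₃ 1 1 z₃ 1 ≠ 0) :
    (z₁ * z₃ - z₃ + 1) * (z₂ * z₃ - z₂ + 1) * z₃ ^ (m + 2) *
        refZ (m + 2) z₁ z₂ (1 / z₃) (z₁ * (1 / z₃)) 1 =
      (z₁ * z₃ / (refZ m (1 : K) 1 1 1 1 * (z₁ - z₂) * (z₃ - 1))) *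
        ((z₁ * z₃ - z₁ + 1) * (z₁ * z₃ - z₃ + 1) * z₂ * refZ (m + 1) z₁ 1 1 z₁ 1 *
            refZ (m + 1) z₂ z₃ 1 z₂ 1 -
          (z₂ * z₃ - z₂ + 1) * (z₂ * z₃ - z₃ + 1) * z₁ * refZ (m + 1) z₂ 1 1 z₂ 1 *
            refZ (m + 1) z₁ z₃ 1 z₁ 1) +
      (z₂ - 1) * (z₃ - 1) * (z₁ * z₃ - z₃ + 1) * z₁ * z₂ ^ (m + 2) * refZ (m + 1) z₁ 1 1 z₁ 1 +
      (z₁ - 1) * (z₃ - 1) * (z₂ * z₃ - z₂ + 1) * z₃ ^ (m + 2) * refZ (m + 1) z₂ 1 1 z₂ 1 := by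
  have key := refZ_specialized_identity ω hω m z₁ z₂ z₃ h₁ h₂ h₃ hz hz' h₁₃ h₂₃ hS hS₃
  have hd : refZ m (1 : K) 1 1 1 1 * (z₁ - z₂) * (z₃ - 1) ≠ 0 :=
    mul_ne_zero (mul_ne_zero hT (sub_ne_zero.2 h₁₂)) (sub_ne_zero.2 hz')
  rw [← key, ← mul_assoc, div_mul_cancel₀ _ hd, refZ_expand m z₁ z₂ (1 / z₃) ((_ + 1) / z₃),
    refZ_expand m z₁ z₂ (1 / z₃) (z₁ * _), one_div, inv_pow, pow_succ z₃ (m + 1)]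
  field_simp
  ring

end RefinedIdentity

section StepSequences

variable {n : ℕ}

theorem sum_castSucc_lt_zero (a : Fin n → ℤ) :
    ∑ j ∈ univ.filter (fun j : Fin n => j.castSucc < 0), a j = 0 := by
  simp

theorem sum_castSucc_lt_succ (a : Fin n → ℤ) (j : Fin n) :
    ∑ j' ∈ univ.filter (fun j' : Fin n => j'.castSucc < j.succ), a j' =
      ∑ j' ∈ univ.filter (fun j' : Fin n => j'.castSucc < j.castSucc), a j' + a j := by
  have : univ.filter (fun j' : Fin n => j'.castSucc < j.succ) =
      insert j (univ.filter (fun j' : Fin n => j'.castSucc < j.castSucc)) := by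
    ext k
    simp [Fin.castSucc_lt_succ_iff, le_iff_eq_or_lt]
  rw [this, sum_insert (by simp), add_comm]

theorem sum_castSucc_lt_of_step (a : Fin n → ℤ) (b : Fin (n + 1) → Bool) (h0 : b 0 = false)
    (h : ∀ j, a j = (b j.succ).toInt - (b j.castSucc).toInt) (k : Fin (n + 1)) :
    ∑ j ∈ univ.filter (fun j : Fin n => j.castSucc < k), a j = (b k).toInt := by
  induction k using Fin.induction with
  | zero => rw [h0, sum_castSucc_lt_zero]; rfl
  | succ k ih => rw [sum_castSucc_lt_succ, ih, h]; ring

theorem exists_step (b : Fin (n + 1) → Bool) (k l : Fin (n + 1)) (hkl : k ≤ l)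
    (hk : b k = false) (hl : b l = true) :
    ∃ j : Fin n, k ≤ j.castSucc ∧ j.succ ≤ l ∧ b j.castSucc = false ∧ b j.succ = true := by
  by_contra! H
  have : ∀ i, k ≤ i → i ≤ l → b i = false := by
    intro i
    induction i using Fin.induction with
    | zero => intro h _; rwa [Fin.le_zero_iff.1 h] at hk
    | succ i ih =>
      intro h1 h2
      rcases h1.eq_or_lt with h1 | h1
      · rwa [← h1]
      · have h3 : k ≤ i.castSucc := Fin.le_castSucc_iff.2 h1
        simpa using H i h3 h2 (ih h3 ((Fin.castSucc_le_succ i).trans h2))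
  simp [this l hkl le_rfl] at hl

theorem step_monotone (a : Fin n → ℤ) (b : Fin (n + 1) → Bool)
    (h : ∀ j, a j = (b j.succ).toInt - (b j.castSucc).toInt) (ha : ∀ j, 0 ≤ a j) : Monotone b := by
  rw [Fin.monotone_iff_le_succ]
  intro j
  have := ha j
  rw [h] at this
  revert this
  cases b j.succ <;> cases b j.castSucc <;> simp

theorem eq_zero_and_exists_gt_iff (a : Fin n → ℤ) (b : Fin (n + 1) → Bool)
    (h : ∀ j, a j = (b j.succ).toInt - (b j.castSucc).toInt) (ha : ∀ j, 0 ≤ a j)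
    (hl : b (Fin.last n) = true) (j : Fin n) :
    (a j = 0 ∧ ∃ j', j < j' ∧ a j' = 1) ↔ b j.succ = false := by
  have hb := step_monotone a b h ha
  constructor
  · rintro ⟨-, j', h1, h2⟩
    by_contra h3
    have h4 : b j.succ ≤ b j'.castSucc := hb (Fin.succ_le_castSucc_iff.2 h1)
    rw [h] at h2
    revert h2 h3 h4
    cases b j.succ <;> cases b j'.succ <;> cases b j'.castSucc <;> simp
  · intro h0
    refine ⟨?_, ?_⟩
    · have h4 : b j.castSucc ≤ b j.succ := hb (Fin.castSucc_le_succ j)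
      rw [h]
      rw [h0] at h4 ⊢
      revert h4
      cases b j.castSucc <;> simp
    · obtain ⟨j', h1, -, h2, h3⟩ := exists_step b _ _ (Fin.le_last _) h0 hl
      exact ⟨j', Fin.succ_le_castSucc_iff.1 h1, by rw [h, h2, h3]; rfl⟩

theorem eq_zero_and_exists_lt_iff (a : Fin n → ℤ) (b : Fin (n + 1) → Bool)
    (h : ∀ j, a j = (b j.succ).toInt - (b j.castSucc).toInt) (ha : ∀ j, 0 ≤ a j)
    (hz : b 0 = false) (j : Fin n) :
    (a j = 0 ∧ ∃ j', j' < j ∧ a j' = 1) ↔ b j.castSucc = true := by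
  have hb := step_monotone a b h ha
  constructor
  · rintro ⟨-, j', h1, h2⟩
    by_contra h3
    have h4 : b j'.succ ≤ b j.castSucc := hb (Fin.succ_le_castSucc_iff.2 h1)
    rw [h] at h2
    revert h2 h3 h4
    cases b j.castSucc <;> cases b j'.succ <;> cases b j'.castSucc <;> simp
  · intro h0
    refine ⟨?_, ?_⟩
    · have h4 : b j.castSucc ≤ b j.succ := hb (Fin.castSucc_le_succ j)
      rw [h]
      rw [h0] at h4 ⊢
      revert h4
      cases b j.succ <;> simp
    · obtain ⟨j', -, h1, h2, h3⟩ := exists_step b _ _ (Fin.zero_le _) hz h0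
      exact ⟨j', Fin.succ_le_castSucc_iff.1 h1, by rw [h, h2, h3]; rfl⟩

end StepSequences

section LatticeModel

variable {n : ℕ}

/-- The edge states `h` (horizontal) and `v` (vertical) satisfy the domain wall boundary conditions
and the ice rule at every vertex. -/
def IsIceState (h : Fin n → Fin (n + 1) → Bool) (v : Fin (n + 1) → Fin n → Bool) : Prop :=
  ((∀ i, h i 0 = false) ∧ (∀ i, h i (Fin.last n) = true) ∧ v 0 = (fun _ => false) ∧
    v (Fin.last n) = fun _ => true) ∧
  ∀ i j, (h i j.succ).toInt - (h i j.castSucc).toInt =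
    (v i.succ j).toInt - (v i.castSucc j).toInt

/-- The horizontal edge states of an alternating sign matrix. -/
def horizontalState (e : Fin n → Fin n → Fin 3) (i : Fin n) (k : Fin (n + 1)) : Bool :=
  decide (∑ j ∈ univ.filter (fun j : Fin n => j.castSucc < k), asmMat e i j = 1)

/-- The vertical edge states of an alternating sign matrix. -/
def verticalState (e : Fin n → Fin n → Fin 3) (k : Fin (n + 1)) (j : Fin n) : Bool :=
  decide (∑ i ∈ univ.filter (fun i : Fin n => i.castSucc < k), asmMat e i j = 1)

/-- The matrix encoding of a configuration of horizontal edge states. -/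
def iceMatrix (h : Fin n → Fin (n + 1) → Bool) (i j : Fin n) : Fin 3 :=
  match h i j.castSucc, h i j.succ with
  | false, true => 2
  | true, false => 0
  | _, _ => 1

theorem asmMat_iceMatrix (h : Fin n → Fin (n + 1) → Bool) (i j : Fin n) :
    asmMat (iceMatrix h) i j = (h i j.succ).toInt - (h i j.castSucc).toInt := by
  unfold asmMat iceMatrix
  cases h i j.castSucc <;> cases h i j.succ <;> rfl

theorem asmMat_injective {e e' : Fin n → Fin n → Fin 3} (h : asmMat e = asmMat e') : e = e' := by
  funext i j
  have := congrFun (congrFun h i) j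
  simp only [asmMat] at this
  exact Fin.ext (by omega)

theorem filter_castSucc_lt_succ (j : Fin n) :
    univ.filter (fun j' : Fin n => j'.castSucc < j.succ) = univ.filter fun j' => j' ≤ j := by
  ext k
  simp [Fin.castSucc_lt_succ_iff]

theorem filter_castSucc_lt_last :
    univ.filter (fun j : Fin n => j.castSucc < Fin.last n) = univ := by
  ext k
  simp [Fin.castSucc_lt_last]

theorem toInt_decide_sum_eq_one (a : Fin n → ℤ)
    (h : ∀ j, ∑ j' ∈ univ.filter (fun j' => j' ≤ j), a j' = 0 ∨
      ∑ j' ∈ univ.filter (fun j' => j' ≤ j), a j' = 1) (k : Fin (n + 1)) :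
    (decide (∑ j ∈ univ.filter (fun j : Fin n => j.castSucc < k), a j = 1)).toInt =
      ∑ j ∈ univ.filter (fun j : Fin n => j.castSucc < k), a j := by
  have : ∑ j ∈ univ.filter (fun j : Fin n => j.castSucc < k), a j = 0 ∨
      ∑ j ∈ univ.filter (fun j : Fin n => j.castSucc < k), a j = 1 := by
    cases k using Fin.cases with
    | zero => exact Or.inl (sum_castSucc_lt_zero a)
    | succ k => rw [filter_castSucc_lt_succ]; exact h k
  rcases this with h | h <;> simp [h]

theorem asmMat_eq_horizontalState {e : Fin n → Fin n → Fin 3} (he : IsASM (asmMat e))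
    (i j : Fin n) : asmMat e i j =
      (horizontalState e i j.succ).toInt - (horizontalState e i j.castSucc).toInt := by
  unfold horizontalState
  rw [toInt_decide_sum_eq_one _ (he.2.1 i), toInt_decide_sum_eq_one _ (he.2.1 i),
    sum_castSucc_lt_succ]
  ring

theorem asmMat_eq_verticalState {e : Fin n → Fin n → Fin 3} (he : IsASM (asmMat e))
    (i j : Fin n) : asmMat e i j =
      (verticalState e i.succ j).toInt - (verticalState e i.castSucc j).toInt := by
  unfold verticalState
  rw [toInt_decide_sum_eq_one (fun i => asmMat e i j) (fun i => he.2.2.1 i j),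
    toInt_decide_sum_eq_one (fun i => asmMat e i j) (fun i => he.2.2.1 i j),
    sum_castSucc_lt_succ]
  ring

theorem isIceState_of_isASM {e : Fin n → Fin n → Fin 3} (he : IsASM (asmMat e)) :
    IsIceState (horizontalState e) (verticalState e) := by
  refine ⟨⟨fun i => ?_, fun i => ?_, ?_, ?_⟩, fun i j => ?_⟩
  · simp [horizontalState]
  · rw [horizontalState, filter_castSucc_lt_last, he.2.2.2.1 i]; rfl
  · funext j; simp [verticalState]
  · funext j; rw [verticalState, filter_castSucc_lt_last, he.2.2.2.2 j]; rfl
  · rw [← asmMat_eq_horizontalState he, asmMat_eq_verticalState he]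

theorem isASM_iceMatrix {h : Fin n → Fin (n + 1) → Bool} {v : Fin (n + 1) → Fin n → Bool}
    (hv : IsIceState h v) : IsASM (asmMat (iceMatrix h)) := by
  obtain ⟨⟨h1, h2, h3, h4⟩, h5⟩ := hv
  have hb : ∀ b : Bool, b.toInt = 0 ∨ b.toInt = 1 := by decide
  have hr := fun i => sum_castSucc_lt_of_step (asmMat (iceMatrix h) i) (h i) (h1 i)
    (asmMat_iceMatrix h i)
  have hc := fun j => sum_castSucc_lt_of_step (fun i => asmMat (iceMatrix h) i j) (fun k => v k j)
    (by rw [h3]) (fun i => by rw [asmMat_iceMatrix, h5])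
  refine ⟨fun i j => ?_, fun i j => ?_, fun i j => ?_, fun i => ?_, fun j => ?_⟩
  · rw [asmMat_iceMatrix]
    cases h i j.castSucc <;> cases h i j.succ <;> simp
  · rw [← filter_castSucc_lt_succ, hr]; exact hb _
  · rw [← filter_castSucc_lt_succ, hc]; exact hb _
  · rw [← filter_castSucc_lt_last, hr, h2]; rfl
  · rw [← filter_castSucc_lt_last, hc, h4]; rfl

theorem horizontalState_iceMatrix {h : Fin n → Fin (n + 1) → Bool}
    {v : Fin (n + 1) → Fin n → Bool} (hv : IsIceState h v) :
    horizontalState (iceMatrix h) = h := by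
  funext i k
  rw [horizontalState, sum_castSucc_lt_of_step _ (h i) (hv.1.1 i) (asmMat_iceMatrix h i)]
  cases h i k <;> rfl

theorem verticalState_iceMatrix {h : Fin n → Fin (n + 1) → Bool}
    {v : Fin (n + 1) → Fin n → Bool} (hv : IsIceState h v) :
    verticalState (iceMatrix h) = v := by
  funext k j
  rw [verticalState, sum_castSucc_lt_of_step (fun i => asmMat (iceMatrix h) i j) (fun k => v k j)
    (by rw [hv.1.2.2.1]) (fun i => by rw [asmMat_iceMatrix, hv.2])]
  cases v k j <;> rfl

theorem iceMatrix_horizontalState {e : Fin n → Fin n → Fin 3} (he : IsASM (asmMat e)) :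
    iceMatrix (horizontalState e) = e := by
  apply asmMat_injective
  funext i j
  rw [asmMat_iceMatrix, asmMat_eq_horizontalState he]

open Classical in
theorem sum_isASM_eq {R : Type*} [CommRing R] (f : (Fin n → Fin n → Fin 3) → R)
    (w : Fin n → Fin n → Bool → Bool → Bool → Bool → R)
    (hw : ∀ i j l t r b, r.toInt - l.toInt ≠ b.toInt - t.toInt → w i j l t r b = 0)
    (hf : ∀ e, IsASM (asmMat e) → f e = ∏ i, ∏ j, w i j (horizontalState e i j.castSucc)
      (verticalState e i.castSucc j) (horizontalState e i j.succ) (verticalState e i.succ j)) :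
    ∑ e, (if IsASM (asmMat e) then f e else 0) =
      latticeZ n n w (fun _ => false) (fun _ => true) (fun _ => false) (fun _ => true) := by
  rw [latticeZ, ← Fintype.sum_prod_type', ← sum_filter]
  have h0 : ∀ p : (Fin n → Fin (n + 1) → Bool) × (Fin (n + 1) → Fin n → Bool),
      (if (∀ i, p.1 i 0 = false) ∧ (∀ i, p.1 i (Fin.last n) = true) ∧ p.2 0 = (fun _ => false) ∧
          p.2 (Fin.last n) = (fun _ => true) then
        ∏ i, ∏ j, w i j (p.1 i j.castSucc) (p.2 i.castSucc j) (p.1 i j.succ) (p.2 i.succ j)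
        else 0) =
      if IsIceState p.1 p.2 then
        ∏ i, ∏ j, w i j (p.1 i j.castSucc) (p.2 i.castSucc j) (p.1 i j.succ) (p.2 i.succ j)
        else 0 := by
    intro p
    unfold IsIceState
    by_cases h : ∀ i j, (p.1 i j.succ).toInt - (p.1 i j.castSucc).toInt =
      (p.2 i.succ j).toInt - (p.2 i.castSucc j).toInt
    · simp only [h, implies_true, and_true]
    · push Not at h
      obtain ⟨i, j, h⟩ := h
      have : ∏ i, ∏ j, w i j (p.1 i j.castSucc) (p.2 i.castSucc j) (p.1 i j.succ)
          (p.2 i.succ j) = 0 :=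
        prod_eq_zero (mem_univ i) (prod_eq_zero (mem_univ j) (hw _ _ _ _ _ _ h))
      rw [this, ite_self, ite_self]
  rw [sum_congr rfl fun p _ => h0 p, ← sum_filter]
  refine sum_bij' (fun e _ => (horizontalState e, verticalState e)) (fun p _ => iceMatrix p.1)
    ?_ ?_ ?_ ?_ ?_
  · intro e he
    simp only [mem_filter, mem_univ, true_and] at he ⊢
    exact isIceState_of_isASM he
  · intro p hp
    simp only [mem_filter, mem_univ, true_and] at hp ⊢
    exact isASM_iceMatrix hp
  · intro e he
    simp only [mem_filter, mem_univ, true_and] at he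
    exact iceMatrix_horizontalState he
  · intro p hp
    simp only [mem_filter, mem_univ, true_and] at hp
    exact Prod.ext (horizontalState_iceMatrix hp) (verticalState_iceMatrix hp)
  · intro e he
    simp only [mem_filter, mem_univ, true_and] at he
    exact hf e he

end LatticeModel

section Refinement

variable {R : Type*} [CommRing R]

theorem rhoT_eq {m : ℕ} {e : Fin (m + 1) → Fin (m + 1) → Fin 3} (he : IsASM (asmMat e)) :
    rhoT (asmMat e) = (univ.filter fun j : Fin (m + 1) => horizontalState e 0 j.succ = false).card := by
  have hv := isIceState_of_isASM he
  refine congrArg card (filter_congr fun j _ => ?_)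
  refine eq_zero_and_exists_gt_iff (asmMat e 0) (horizontalState e 0)
    (asmMat_eq_horizontalState he 0) (fun k => ?_) (hv.1.2.1 0) j
  rw [asmMat_eq_verticalState he, Fin.castSucc_zero, hv.1.2.2.1]
  dsimp only
  cases verticalState e (Fin.succ 0) k <;> decide

theorem rhoB_eq {m : ℕ} {e : Fin (m + 1) → Fin (m + 1) → Fin 3} (he : IsASM (asmMat e)) :
    rhoB (asmMat e) =
      (univ.filter fun j : Fin (m + 1) => horizontalState e (Fin.last m) j.castSucc = true).card := by
  have hv := isIceState_of_isASM he
  refine congrArg card (filter_congr fun j _ => ?_)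
  refine eq_zero_and_exists_lt_iff (asmMat e (Fin.last m)) (horizontalState e (Fin.last m))
    (asmMat_eq_horizontalState he _) (fun k => ?_) (hv.1.1 _) j
  rw [asmMat_eq_verticalState he, Fin.succ_last, hv.1.2.2.2]
  dsimp only
  cases verticalState e (Fin.castSucc (Fin.last m)) k <;> decide

theorem rhoL_eq {m : ℕ} {e : Fin (m + 1) → Fin (m + 1) → Fin 3} (he : IsASM (asmMat e)) :
    rhoL (asmMat e) = (univ.filter fun i : Fin (m + 1) => verticalState e i.succ 0 = false).card := by
  have hv := isIceState_of_isASM he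
  refine congrArg card (filter_congr fun i _ => ?_)
  refine eq_zero_and_exists_gt_iff (fun i => asmMat e i 0) (fun k => verticalState e k 0)
    (fun i => asmMat_eq_verticalState he i 0) (fun k => ?_) (congrFun hv.1.2.2.2 0) i
  rw [asmMat_eq_horizontalState he, Fin.castSucc_zero, hv.1.1]
  cases horizontalState e k (Fin.succ 0) <;> decide

theorem sixV_eq_zero (α β γ δ : R) (l t r b : Bool)
    (h : r.toInt - l.toInt ≠ b.toInt - t.toInt) : sixV α β γ δ l t r b = 0 := by
  revert h
  cases l <;> cases t <;> cases r <;> cases b <;> simp [sixV]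

theorem sixV_boundary (z₁ z₂ z₃ : R) (p q s : Prop) [Decidable p] [Decidable q] [Decidable s]
    (l t r b : Bool) (h : r.toInt - l.toInt = b.toInt - t.toInt) (ht : p → t = false)
    (hb : q → b = true) (hl : s → l = false) :
    sixV ((if p then z₁ else 1) * (if q then z₂ else 1) * (if s then z₃ else 1)) 1 1 1 l t r b =
      (if p then if r = false then z₁ else 1 else 1) *
        (if q then if l = true then z₂ else 1 else 1) *
        (if s then if b = false then z₃ else 1 else 1) := by
  revert h ht hb hl
  by_cases p <;> by_cases q <;> by_cases s <;>
    cases l <;> cases t <;> cases r <;> cases b <;> simp_all [sixV]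

theorem prod_ite_const (n : ℕ) (p : Fin n → Prop) [DecidablePred p] (z : R) :
    ∏ j, (if p j then z else 1) = z ^ (univ.filter p).card := by
  rw [prod_ite, prod_const, prod_const_one, mul_one]

theorem Zqua_eq_dwZ (m : ℕ) (z₁ z₂ z₃ : R) :
    Zqua (m + 1) 1 1 z₁ 1 z₂ z₃ = dwZ (m + 1) (fun i j => (if i = 0 then z₁ else 1) *
      (if i = Fin.last m then z₂ else 1) * (if j = 0 then z₃ else 1))
      (fun _ _ => 1) (fun _ _ => 1) (fun _ _ => 1) := by
  unfold Zqua dwZ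
  refine sum_isASM_eq _ _ (fun i j l t r b h => sixV_eq_zero _ _ _ _ _ _ _ _ h) fun e he => ?_
  have hv := isIceState_of_isASM he
  have h0 : ∀ i j : Fin (m + 1), _ := fun i j => sixV_boundary z₁ z₂ z₃ (i = 0) (i = Fin.last m) (j = 0)
    (horizontalState e i j.castSucc) (verticalState e i.castSucc j) (horizontalState e i j.succ)
    (verticalState e i.succ j) (hv.2 i j)
    (by rintro rfl; rw [Fin.castSucc_zero, hv.1.2.2.1])
    (by rintro rfl; rw [Fin.succ_last, hv.1.2.2.2])
    (by rintro rfl; rw [Fin.castSucc_zero, hv.1.1])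
  simp only [h0, prod_mul_distrib, one_pow, one_mul, mul_one]
  rw [rhoT_eq he, rhoB_eq he, rhoL_eq he]
  congr 1
  · congr 1
    · rw [Fintype.prod_eq_single 0 fun i hi => prod_eq_one fun j _ => if_neg hi]
      simp only [if_true, prod_ite_const]
    · rw [Fintype.prod_eq_single (Fin.last m) fun i hi => prod_eq_one fun j _ => if_neg hi]
      simp only [if_true, prod_ite_const]
  · rw [prod_comm, Fintype.prod_eq_single 0 fun i hi => prod_eq_one fun j _ => if_neg hi]
    simp only [if_true, prod_ite_const]

theorem Zqua_eq_refZ (m : ℕ) (z₁ z₂ z₃ : R) :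
    Zqua (m + 2) 1 1 z₁ 1 z₂ z₃ = refZ (m + 1) z₁ z₂ z₃ (z₁ * z₃) 1 := by
  rw [Zqua_eq_dwZ, refZ]
  have hl : (0 : Fin (m + 2)) ≠ Fin.last (m + 1) := Fin.last_pos.ne
  congr 1
  · funext i j
    split_ifs <;> simp_all
  · simp

theorem Zqua_one_eq_refZ (m : ℕ) : Zqua (m + 1) (1 : R) 1 1 1 1 1 = refZ m 1 1 1 1 1 := by
  rw [Zqua_eq_dwZ, refZ]
  simp

theorem map_Zqua {S : Type*} [CommRing S] (f : R →+* S) (n : ℕ) (x y z₁ z₂ z₃ z₄ : R) :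
    f (Zqua n x y z₁ z₂ z₃ z₄) = Zqua n (f x) (f y) (f z₁) (f z₂) (f z₃) (f z₄) := by
  simp only [Zqua, map_sum, apply_ite f, map_mul, map_pow, map_zero]

theorem numASM_eq_Zqua (n : ℕ) : (numASM n : R) = Zqua n 1 1 1 1 1 1 := by
  simp only [Zqua, numASM, one_pow, mul_one, sum_boole]

theorem isASM_one (n : ℕ) :
    IsASM (asmMat fun i j : Fin n => if i = j then (2 : Fin 3) else 1) := by
  have h : asmMat (fun i j : Fin n => if i = j then (2 : Fin 3) else 1) =
      fun i j => if i = j then 1 else 0 := by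
    funext i j
    simp only [asmMat]
    split_ifs <;> rfl
  rw [h]
  refine ⟨fun i j => ?_, fun i j => ?_, fun i j => ?_, fun i => ?_, fun j => ?_⟩
  · dsimp only; split_ifs <;> simp
  · rw [sum_ite_eq]; split_ifs <;> simp
  · rw [sum_ite_eq']; split_ifs <;> simp
  · simp
  · simp

theorem numASM_ne_zero (n : ℕ) : numASM n ≠ 0 := by
  classical
  refine (card_pos.2 ⟨fun i j => if i = j then 2 else 1, ?_⟩).ne'
  simpa using isASM_one n

end Refinement

section RationalFunctions

theorem numASM_eq_refZ {K : Type*} [Field K] (m : ℕ) :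
    (numASM (m + 1) : K) = refZ m (1 : K) 1 1 1 1 := by
  rw [numASM_eq_Zqua, Zqua_one_eq_refZ]

theorem Zsing_eq_refZ {K : Type*} [Field K] (m : ℕ) (z : K) :
    Zsing (m + 2) 1 1 z = refZ (m + 1) z 1 1 z 1 := by
  rw [Zsing, Zqua_eq_refZ, mul_one]

theorem Zopp_eq_refZ {K : Type*} [Field K] (m : ℕ) (z y : K) :
    Zopp (m + 2) 1 1 z y = refZ (m + 1) z y 1 z 1 := by
  rw [Zopp, Zqua_eq_refZ, mul_one]

theorem Ztri_eq_refZ {K : Type*} [Field K] (m : ℕ) (x y z : K) :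
    Ztri (m + 2) 1 1 x y z = refZ (m + 1) x y z (x * z) 1 := by
  rw [Ztri, Zqua_eq_refZ]

theorem exists_sq_add_self_add_one_eq_zero (L : Type*) [Field L] [CharZero L] [IsAlgClosed L] :
    ∃ ω : L, ω ^ 2 + ω + 1 = 0 := by
  obtain ⟨s, hs⟩ := IsAlgClosed.exists_pow_nat_eq (-3 : L) (n := 2) two_pos
  exact ⟨(s - 1) / 2, by linear_combination hs / 4⟩

theorem Ztri_identity {K : Type*} [Field K] [CharZero K] (m : ℕ) (z₁ z₂ z₃ : K)
    (h₁ : z₁ ^ 2 - z₁ + 1 ≠ 0) (h₂ : z₂ ^ 2 - z₂ + 1 ≠ 0) (h₃ : z₃ ^ 2 - z₃ + 1 ≠ 0)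
    (hz : z₃ ≠ 0) (hz' : z₃ ≠ 1) (h₁₂ : z₁ ≠ z₂) (h₁₃ : z₁ ≠ z₃) (h₂₃ : z₂ ≠ z₃)
    (hS : Zsing (m + 2) 1 1 z₃ ≠ 0) :
    (z₁ * z₃ - z₃ + 1) * (z₂ * z₃ - z₂ + 1) * z₃ ^ (m + 2) * Ztri (m + 3) 1 1 z₁ z₂ (1 / z₃) =
      (z₁ * z₃ / ((numASM (m + 1) : K) * (z₁ - z₂) * (z₃ - 1))) *
        ((z₁ * z₃ - z₁ + 1) * (z₁ * z₃ - z₃ + 1) * z₂ *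
            Zsing (m + 2) 1 1 z₁ * Zopp (m + 2) 1 1 z₂ z₃ -
         (z₂ * z₃ - z₂ + 1) * (z₂ * z₃ - z₃ + 1) * z₁ *
            Zsing (m + 2) 1 1 z₂ * Zopp (m + 2) 1 1 z₁ z₃)
      + (z₂ - 1) * (z₃ - 1) * (z₁ * z₃ - z₃ + 1) * z₁ * z₂ ^ (m + 2) * Zsing (m + 2) 1 1 z₁
      + (z₁ - 1) * (z₃ - 1) * (z₂ * z₃ - z₂ + 1) * z₃ ^ (m + 2) * Zsing (m + 2) 1 1 z₂ := by
  obtain ⟨ω, hω⟩ := exists_sq_add_self_add_one_eq_zero (AlgebraicClosure K)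
  have : CharZero (AlgebraicClosure K) := charZero_of_injective_algebraMap
    (algebraMap K (AlgebraicClosure K)).injective
  set f := algebraMap K (AlgebraicClosure K)
  have hf : ∀ z : K, z ^ 2 - z + 1 ≠ 0 → f z + ω ^ 2 ≠ 0 := fun z h h0 => h <| f.injective <| by
    simp only [map_add, map_sub, map_pow, map_one, map_zero]
    linear_combination (f z + ω) * h0 - (f z + ω - 1) * hω
  have hn : ∀ n : ℕ, refZ n (1 : AlgebraicClosure K) 1 1 1 1 ≠ 0 := fun n => by
    rw [← numASM_eq_refZ]
    exact Nat.cast_ne_zero.2 (numASM_ne_zero _)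
  have hS' : f (Zsing (m + 2) 1 1 z₃) ≠ 0 := (map_ne_zero f).2 hS
  rw [Zsing, map_Zqua, map_one, ← Zsing, Zsing_eq_refZ] at hS'
  have key := refZ_identity ω hω m (f z₁) (f z₂) (f z₃) (hf _ h₁) (hf _ h₂) (hf _ h₃)
    ((map_ne_zero f).2 hz) (by rwa [Ne, map_eq_one_iff f f.injective]) (f.injective.ne h₁₂)
    (f.injective.ne h₁₃) (f.injective.ne h₂₃) (hn _) (hn _) hS'
  rw [← Zsing_eq_refZ, ← Zsing_eq_refZ, ← Zopp_eq_refZ, ← Zopp_eq_refZ, ← Ztri_eq_refZ,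
    ← numASM_eq_refZ] at key
  apply f.injective
  simp only [Zsing, Zopp, Ztri] at key ⊢
  simpa only [map_Zqua, map_add, map_sub, map_mul, map_div₀, map_pow, map_one, map_natCast]
    using key

theorem algebraMap_ne_zero_of_eval_ne_zero (p : MvPolynomial (Fin 3) ℚ) (g : Fin 3 → ℚ)
    (h : MvPolynomial.eval g p ≠ 0) : algebraMap (MvPolynomial (Fin 3) ℚ) K3 p ≠ 0 := by
  refine (map_ne_zero_iff _ (IsFractionRing.injective _ _)).2 fun h0 => h ?_
  rw [h0, map_zero]

theorem algebraMap_X_sq_sub_add_one_ne_zero (i : Fin 3) :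
    algebraMap (MvPolynomial (Fin 3) ℚ) K3 (MvPolynomial.X i) ^ 2 -
      algebraMap (MvPolynomial (Fin 3) ℚ) K3 (MvPolynomial.X i) + 1 ≠ 0 := by
  have h := algebraMap_ne_zero_of_eval_ne_zero (MvPolynomial.X i ^ 2 - MvPolynomial.X i + 1) 0
    (by simp)
  rwa [map_add, map_sub, map_pow, map_one] at h

theorem algebraMap_X_injective :
    Function.Injective fun i : Fin 3 => algebraMap (MvPolynomial (Fin 3) ℚ) K3 (MvPolynomial.X i) :=
  (IsFractionRing.injective _ _).comp MvPolynomial.X_injective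

theorem Zsing_algebraMap_X_ne_zero (n : ℕ) (i : Fin 3) :
    Zsing n 1 1 (algebraMap (MvPolynomial (Fin 3) ℚ) K3 (MvPolynomial.X i)) ≠ 0 := by
  have h := algebraMap_ne_zero_of_eval_ne_zero (Zqua n 1 1 (MvPolynomial.X i) 1 1 1) 1 (by
    rw [map_Zqua, MvPolynomial.eval_X, map_one, Pi.one_apply, ← numASM_eq_Zqua]
    exact Nat.cast_ne_zero.2 (numASM_ne_zero n))
  rwa [map_Zqua, map_one] at h

end RationalFunctions

/-- Identity for the triply-refined ASM generating function at `x = y = 1`,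
as an identity in the field of rational functions `ℚ(z1,z2,z3)`, where
`numASM m` is the number of ASMs of size `m`. -/
theorem stmt11 (n : ℕ) (hn : 3 ≤ n) :
    (vz1 * vz3 - vz3 + 1) * (vz2 * vz3 - vz2 + 1) * vz3 ^ (n - 1) *
        Ztri n (1 : K3) 1 vz1 vz2 (1 / vz3) =
      (vz1 * vz3 / ((numASM (n - 2) : K3) * (vz1 - vz2) * (vz3 - 1))) *
        ((vz1 * vz3 - vz1 + 1) * (vz1 * vz3 - vz3 + 1) * vz2 *
            Zsing (n - 1) (1 : K3) 1 vz1 * Zopp (n - 1) (1 : K3) 1 vz2 vz3 -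
         (vz2 * vz3 - vz2 + 1) * (vz2 * vz3 - vz3 + 1) * vz1 *
            Zsing (n - 1) (1 : K3) 1 vz2 * Zopp (n - 1) (1 : K3) 1 vz1 vz3)
      + (vz2 - 1) * (vz3 - 1) * (vz1 * vz3 - vz3 + 1) * vz1 * vz2 ^ (n - 1) *
          Zsing (n - 1) (1 : K3) 1 vz1
      + (vz1 - 1) * (vz3 - 1) * (vz2 * vz3 - vz2 + 1) * vz3 ^ (n - 1) *
          Zsing (n - 1) (1 : K3) 1 vz2 := by
  obtain ⟨m, rfl⟩ := Nat.exists_eq_add_of_le' hn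
  refine Ztri_identity m vz1 vz2 vz3 (algebraMap_X_sq_sub_add_one_ne_zero 0)
    (algebraMap_X_sq_sub_add_one_ne_zero 1) (algebraMap_X_sq_sub_add_one_ne_zero 2)
    (algebraMap_ne_zero_of_eval_ne_zero _ 1 (by simp)) (sub_ne_zero.1 ?_)
    (algebraMap_X_injective.ne (by decide)) (algebraMap_X_injective.ne (by decide))
    (algebraMap_X_injective.ne (by decide)) (Zsing_algebraMap_X_ne_zero _ 2)
  have h := algebraMap_ne_zero_of_eval_ne_zero (MvPolynomial.X 2 - 1) 0 (by simp)
  rwa [map_sub, map_one] at h
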